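/- arXiv:2406.05280 — 2 statements merged into one kernel-verified Lean document; each statement's English description precedes it below -/
import Mathlib

section
/- There exists a numerical constant C > 0 with the following property. Let A > 0 and B > 0, and let (g(t))_{t≥0} be a family of finite nonnegative Borel measures on [0,∞) such that: (a) g(0)(E) ≥ A ∫_{E ∩ (0,B)} x^{−1/2} dx for every Borel set E ⊆ [0,∞); (b) g(t)([0,∞)) = g(0)([0,∞)) for all t ≥ 0; (c) for every ε > 0 and every t > 0 the integrand of 𝒦(φ_ε, g(τ)) is g(τ)⊗g(τ)⊗g(τ)-integrable for each τ, the map τ ↦ 𝒦(φ_ε, g(τ)) is integrable on [0,t], and N₀(g(t),ε) − N₀(g(s),ε) = ∫_s^t 𝒦(φ_ε, g(τ)) dτ for all 0 ≤ s < t. Then g(t)({0}) > 0 for every t > C A^{−2}. -/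
open MeasureTheory Set
open scoped ENNReal

/-- The truncated quadratic test function `φ_ε`. -/
noncomputable def phiEps (ε x : ℝ) : ℝ := if x ≤ ε then (1 - x / ε) ^ 2 else 0

/-- `N₀(g,ε) = ∫_{[0,ε]} (1 - x/ε)² dg(x)` (real valued, for finite measures). -/
noncomputable def N0 (g : Measure ℝ) (ε : ℝ) : ℝ := ∫ x in Icc (0:ℝ) ε, (1 - x / ε) ^ 2 ∂g

/-- `N₀(g,ε)` valued in `[0,∞]`. -/
noncomputable def N0e (g : Measure ℝ) (ε : ℝ) : ℝ≥0∞ :=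
  ∫⁻ x in Icc (0:ℝ) ε, ENNReal.ofReal ((1 - x / ε) ^ 2) ∂g

/-- `N_α(g,ε) = ε^{-α} N₀(g,ε)`, valued in `[0,∞]`. -/
noncomputable def NalphaE (g : Measure ℝ) (α ε : ℝ) : ℝ≥0∞ :=
  ENNReal.ofReal (ε ^ (-α)) * N0e g ε

/-- `\underline{N}_α(g,ε) = inf_{0 < δ ≤ ε} N_α(g,δ)`. -/
noncomputable def uNe (g : Measure ℝ) (α ε : ℝ) : ℝ≥0∞ := ⨅ δ ∈ Ioc (0:ℝ) ε, NalphaE g α δ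

/-- `\overline{N}_α(g,ε) = sup_{0 < δ ≤ ε} N_α(g,δ)`. -/
noncomputable def oNe (g : Measure ℝ) (α ε : ℝ) : ℝ≥0∞ := ⨆ δ ∈ Ioc (0:ℝ) ε, NalphaE g α δ

/-- `\underline{N}_α(g) = lim_{ε→0⁺} \underline{N}_α(g,ε)`, a monotone limit in `[0,∞]`. -/
noncomputable def uNlim (g : Measure ℝ) (α : ℝ) : ℝ≥0∞ := ⨆ ε ∈ Ioi (0:ℝ), uNe g α ε

/-- `\overline{N}_α(g) = lim_{ε→0⁺} \overline{N}_α(g,ε)`, a monotone limit in `[0,∞]`. -/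
noncomputable def oNlim (g : Measure ℝ) (α : ℝ) : ℝ≥0∞ := ⨅ ε ∈ Ioi (0:ℝ), oNe g α ε

/-- The integrand of the collision functional `𝒦(φ_ε, g)` of the 4-wave kinetic equation,
with `Φ = min{√ω₁, √ω₂, √ω₃, √((ω₁+ω₂-ω₃)₊)}`. -/
noncomputable def wkeKernel (ε : ℝ) (ω : ℝ × ℝ × ℝ) : ℝ :=
  (min (Real.sqrt ω.1) (min (Real.sqrt ω.2.1) (min (Real.sqrt ω.2.2)
      (Real.sqrt (max (ω.1 + ω.2.1 - ω.2.2) 0)))) /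
    (Real.sqrt ω.1 * Real.sqrt ω.2.1 * Real.sqrt ω.2.2)) *
  (phiEps ε (max (ω.1 + ω.2.1 - ω.2.2) 0) + phiEps ε ω.2.2 - phiEps ε ω.1 - phiEps ε ω.2.1)

/-- The collision functional `𝒦(φ_ε, g)` as a triple integral over `(0,∞)³` against `g⊗g⊗g`. -/
noncomputable def Kcoll (g : Measure ℝ) (ε : ℝ) : ℝ :=
  ∫ ω in (Ioi (0:ℝ)) ×ˢ ((Ioi (0:ℝ)) ×ˢ (Ioi (0:ℝ))), wkeKernel ε ω ∂(g.prod (g.prod g))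

/-!
The sum of the collision kernel over the cyclic permutations of `(ω₁, ω₂, ω₃)` is nonnegative by
convexity of `φ_ε`, so `N₀(g(t), ε)` is nondecreasing in `t`; for `x ≤ y ≤ z` this sum is at least
the second difference of `φ_ε` at `z` with step `y - x`, divided by `√(y z)`. Hence `𝒦(φ_ε, g)` is
large as soon as there is mass both near `0` and in an annulus of size comparable to `ε`: by
pigeonhole, a fixed share of the annular mass sits in a window of width `≪ ε`.

Call `N₀(g, δ) ≥ a √δ` for `δ ≤ b` the bound at level `(a, b)`. If it holds at time `s` but fails at
level `(16 a, b / (256 (1 + η)))` at time `t > s`, say at the scale `δ`, then by monotonicity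
throughout `[s, t]` the annulus between `η δ / 16` and `256 (1 + η) δ` carries mass of order
`η a √δ`, because `√256 = 16` and the factor `1 + η` leaves a surplus. If moreover `0` is not an
atom, `𝒦(φ_δ, g) ≳ η⁷ a³ √δ` on `[s, t]`, which is impossible once `t - s ≳ η⁻⁷ a⁻²`. With
`η = 2⁻ᵏ / 4` and `a = 16ᵏ a₀` these waiting times sum to a multiple of `a₀⁻²`, while
`∏ (1 + η) < ∞`, so the scales are of order `256⁻ᵏ` and at that time `N₀` stays bounded below as
`δ → 0`. Since `N₀(g, δ) → g {0}`, an atom has formed.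
-/

open scoped Topology

lemma add_le_add_of_convexOn {𝕜 : Type*} [Field 𝕜] [LinearOrder 𝕜] [IsStrictOrderedRing 𝕜]
    {S : Set 𝕜} {f : 𝕜 → 𝕜} (hf : ConvexOn 𝕜 S f) {x y h : 𝕜} (hx : x - h ∈ S) (hy : y + h ∈ S)
    (hxy : x ≤ y) (hh : 0 ≤ h) : f x + f y ≤ f (x - h) + f (y + h) := by
  rcases hh.eq_or_lt with rfl | hh
  · simp
  set d := y - x + 2 * h with hd
  have hd0 : 0 < d := by linarith
  have ha : 0 ≤ (y - x + h) / d := div_nonneg (by linarith) hd0.le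
  have hb : 0 ≤ h / d := by positivity
  have hab : (y - x + h) / d + h / d = 1 := by
    rw [← add_div, div_eq_one_iff_eq hd0.ne']; ring
  have hx_comb : (y - x + h) / d * (x - h) + h / d * (y + h) = x := by
    field_simp; rw [hd]; ring
  have hy_comb : h / d * (x - h) + (y - x + h) / d * (y + h) = y := by
    field_simp; rw [hd]; ring
  have hfx := hf.2 hx hy ha hb hab
  have hfy := hf.2 hx hy hb ha ((add_comm _ _).trans hab)
  simp only [smul_eq_mul, hx_comb, hy_comb] at hfx hfy
  linear_combination hfx + hfy + (f (x - h) + f (y + h)) * hab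

lemma mul_measureReal_le_setIntegral {α : Type*} [MeasurableSpace α] {μ : Measure α}
    {f : α → ℝ} {S T : Set α} {c : ℝ} (hS : MeasurableSet S) (hT : MeasurableSet T) (hST : S ⊆ T)
    (hμS : μ S ≠ ∞) (hf : IntegrableOn f T μ) (hf0 : ∀ x ∈ T, 0 ≤ f x) (hc : ∀ x ∈ S, c ≤ f x) :
    c * μ.real S ≤ ∫ x in T, f x ∂μ :=
  (setIntegral_ge_of_const_le_real hS hμS hc (hf.mono_set hST)).trans
    (setIntegral_mono_set hf (ae_restrict_of_forall_mem hT hf0) hST.eventuallyLE)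

lemma exists_Ioc_measureReal_ge (μ : Measure ℝ) {α β : ℝ} (hαβ : α ≤ β) {n : ℕ}
    (hn : n ≠ 0) :
    ∃ c d, α ≤ c ∧ d ≤ β ∧ d - c = (β - α) / n ∧ μ.real (Ioc α β) / n ≤ μ.real (Ioc c d) := by
  set w := (β - α) / n
  have hn0 : (0 : ℝ) < n := by positivity
  have hw0 : 0 ≤ w := div_nonneg (sub_nonneg.2 hαβ) hn0.le
  have hnw : n * w = β - α := mul_div_cancel₀ _ hn0.ne'
  let c : ℕ → ℝ := fun i => α + i * w
  have hc : Monotone c := fun i j hij =>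
    add_le_add_right (mul_le_mul_of_nonneg_right (Nat.cast_le.2 hij) hw0) α
  have hcover : ⋃ i ∈ Finset.range n, Ioc (c i) (c (i + 1)) = Ioc α β := by
    have h := hc.biUnion_Ico_Ioc_map_succ 0 n
    have hβ : α + n * w = β := by linarith
    simpa [c, hβ] using h
  have hsum : μ.real (Ioc α β) ≤ ∑ i ∈ Finset.range n, μ.real (Ioc (c i) (c (i + 1))) :=
    hcover ▸ measureReal_biUnion_finset_le _ _
  obtain ⟨i, hi, hle⟩ := Finset.exists_le_of_sum_le (s := Finset.range n)
    (f := fun _ => μ.real (Ioc α β) / n) (Finset.nonempty_range_iff.2 hn)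
    (by simpa [mul_div_cancel₀ _ hn0.ne'] using hsum)
  refine ⟨c i, c (i + 1), ?_, ?_, ?_, hle⟩
  · exact le_add_of_nonneg_right (by positivity)
  · calc c (i + 1) ≤ c n := hc (Finset.mem_range.1 hi)
      _ = β := by simp only [c]; linarith
  · simp only [c]; push_cast; ring

section CyclicPerm

variable {α : Type*} [MeasurableSpace α]

/-- The cyclic permutation `(x, y, z) ↦ (y, z, x)` of triples, over which the collision kernel is
summed. -/
def cyclicPerm (α : Type*) [MeasurableSpace α] : α × α × α ≃ᵐ α × α × α :=
  MeasurableEquiv.prodComm.trans MeasurableEquiv.prodAssoc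

lemma measurePreserving_cyclicPerm (ν : Measure α) [SFinite ν] :
    MeasurePreserving (cyclicPerm α) (ν.prod (ν.prod ν)) (ν.prod (ν.prod ν)) :=
  (measurePreserving_prodAssoc ν ν ν).comp Measure.measurePreserving_swap

/-- The sum of `f` over the cyclic permutations of its three arguments; it has the same integral
against `ν ⊗ ν ⊗ ν` as `3 f`. -/
def cyclicSum (f : α × α × α → ℝ) (ω : α × α × α) : ℝ :=
  f ω + f (cyclicPerm α ω) + f (cyclicPerm α (cyclicPerm α ω))

lemma cyclicSum_apply (f : α × α × α → ℝ) (x y z : α) :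
    cyclicSum f (x, y, z) = f (x, y, z) + f (y, z, x) + f (z, x, y) := rfl

lemma cyclicSum_rotate (f : α × α × α → ℝ) (x y z : α) :
    cyclicSum f (y, z, x) = cyclicSum f (x, y, z) := by
  simp only [cyclicSum_apply]; ring

lemma cyclicSum_swap {f : α × α × α → ℝ} (hf : ∀ x y z, f (y, x, z) = f (x, y, z)) (x y z : α) :
    cyclicSum f (x, z, y) = cyclicSum f (x, y, z) := by
  simp only [cyclicSum_apply, hf x z, hf z y, hf y x]; ring

variable {ν : Measure α} [SFinite ν] {f : α × α × α → ℝ}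

lemma integrable_comp_cyclicPerm (hf : Integrable f (ν.prod (ν.prod ν))) :
    Integrable (fun ω => f (cyclicPerm α ω)) (ν.prod (ν.prod ν)) :=
  (measurePreserving_cyclicPerm ν).integrable_comp_of_integrable hf

lemma integrable_cyclicSum (hf : Integrable f (ν.prod (ν.prod ν))) :
    Integrable (cyclicSum f) (ν.prod (ν.prod ν)) :=
  (hf.add (integrable_comp_cyclicPerm hf)).add
    (integrable_comp_cyclicPerm (integrable_comp_cyclicPerm hf))

lemma integral_cyclicSum (hf : Integrable f (ν.prod (ν.prod ν))) :
    ∫ ω, cyclicSum f ω ∂(ν.prod (ν.prod ν)) = 3 * ∫ ω, f ω ∂(ν.prod (ν.prod ν)) := by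
  have hf₁ := integrable_comp_cyclicPerm hf
  have hf₂ := integrable_comp_cyclicPerm hf₁
  have integral_rotate (h : α × α × α → ℝ) :
      ∫ ω, h (cyclicPerm α ω) ∂(ν.prod (ν.prod ν)) = ∫ ω, h ω ∂(ν.prod (ν.prod ν)) :=
    (measurePreserving_cyclicPerm ν).integral_comp' h
  calc ∫ ω, cyclicSum f ω ∂(ν.prod (ν.prod ν))
      = ∫ ω, f ω ∂(ν.prod (ν.prod ν)) + ∫ ω, f (cyclicPerm α ω) ∂(ν.prod (ν.prod ν))
        + ∫ ω, f (cyclicPerm α (cyclicPerm α ω)) ∂(ν.prod (ν.prod ν)) :=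
        (integral_add (hf.add hf₁) hf₂).trans (congrArg (· + _) (integral_add hf hf₁))
    _ = 3 * ∫ ω, f ω ∂(ν.prod (ν.prod ν)) := by
        rw [integral_rotate fun ω => f (cyclicPerm α ω), integral_rotate]; ring

end CyclicPerm

section Kernel

variable {ε : ℝ}

lemma phiEps_eq_sq_max (hε : 0 < ε) (x : ℝ) : phiEps ε x = max (1 - x / ε) 0 ^ 2 := by
  unfold phiEps
  split_ifs with h
  · rw [max_eq_left (sub_nonneg.2 ((div_le_one hε).2 h))]
  · rw [max_eq_right (sub_nonpos.2 ((one_le_div hε).2 (not_le.1 h).le)), zero_pow two_ne_zero]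

lemma convexOn_phiEps (hε : 0 < ε) : ConvexOn ℝ univ (phiEps ε) := by
  have haffine : ConvexOn ℝ univ fun x : ℝ => 1 - x / ε :=
    ⟨convex_univ, fun x _ y _ a b _ _ hab => le_of_eq (by
      simp only [smul_eq_mul]; linear_combination -hab)⟩
  have hmax : ConvexOn ℝ univ fun x : ℝ => max (1 - x / ε) 0 :=
    haffine.sup (convexOn_const 0 convex_univ)
  exact (hmax.pow (fun _ _ => le_max_right _ _) 2).congr fun x _ => (phiEps_eq_sq_max hε x).symm

lemma min_le_phiEps_secondDiff (hε : 0 < ε) {z h : ℝ} (hh : 0 ≤ h) (hzh : z - h ≤ ε / 2) :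
    min ((h / ε) ^ 2) (1 / 4) ≤ phiEps ε (z + h) + phiEps ε (z - h) - 2 * phiEps ε z := by
  have hq : 0 ≤ h / ε := by positivity
  have hpq : 1 / 2 ≤ 1 - z / ε + h / ε := by
    have : (z - h) / ε ≤ 1 / 2 := by rw [div_le_iff₀ hε]; linarith
    rw [sub_div] at this
    linarith
  simp only [phiEps_eq_sq_max hε, add_div, sub_div, sub_add_eq_sub_sub, ← sub_add]
  set p := 1 - z / ε
  set q := h / ε
  rw [max_eq_left (by linarith : 0 ≤ p + q)]
  rcases le_total p 0 with hp | hp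
  · refine (min_le_right _ _).trans ?_
    rw [max_eq_right hp, max_eq_right (by linarith : p - q ≤ 0)]
    nlinarith
  · refine (min_le_left _ _).trans ?_
    rw [max_eq_left hp]
    rcases le_total (p - q) 0 with hpq' | hpq'
    · rw [max_eq_right hpq']; nlinarith
    · rw [max_eq_left hpq']; nlinarith

lemma wkeKernel_swap (ε x y z : ℝ) : wkeKernel ε (y, x, z) = wkeKernel ε (x, y, z) := by
  simp only [wkeKernel, add_comm y x, min_left_comm (√y), mul_comm (√y) (√x)]
  ring

lemma wkeKernel_of_third_le {x y z : ℝ} (hz : 0 < z) (hzx : z ≤ x) (hzy : z ≤ y) :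
    wkeKernel ε (x, y, z)
      = (phiEps ε (x + y - z) + phiEps ε z - phiEps ε x - phiEps ε y) / (√x * √y) := by
  have hzs : √z ≤ √(x + y - z) := Real.sqrt_le_sqrt (by linarith)
  have hz' : √z ≠ 0 := (Real.sqrt_pos.2 hz).ne'
  simp only [wkeKernel]
  rw [max_eq_left (by linarith : 0 ≤ x + y - z), min_eq_left hzs,
    min_eq_right (Real.sqrt_le_sqrt hzy), min_eq_right (Real.sqrt_le_sqrt hzx)]
  field_simp

lemma wkeKernel_of_first_le {x y z : ℝ} (hx : 0 < x) (hxz : x ≤ z) (hzy : z ≤ y) :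
    wkeKernel ε (x, y, z)
      = (phiEps ε (x + y - z) + phiEps ε z - phiEps ε x - phiEps ε y) / (√y * √z) := by
  have hxs : √x ≤ √(x + y - z) := Real.sqrt_le_sqrt (by linarith)
  have hx' : √x ≠ 0 := (Real.sqrt_pos.2 hx).ne'
  simp only [wkeKernel]
  rw [max_eq_left (by linarith : 0 ≤ x + y - z),
    min_eq_left (le_min (Real.sqrt_le_sqrt (hxz.trans hzy)) (le_min (Real.sqrt_le_sqrt hxz) hxs))]
  field_simp

lemma wkeKernel_nonneg_of_le_of_le (hε : 0 < ε) {x y z : ℝ} (hxy : x ≤ y) (hyz : y ≤ z) :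
    0 ≤ wkeKernel ε (x, y, z) := by
  rcases le_total (x + y - z) 0 with hneg | hpos
  · simp [wkeKernel, max_eq_right hneg]
  · have hconv := add_le_add_of_convexOn (convexOn_phiEps hε) (mem_univ _) (mem_univ _) hxy
      (sub_nonneg.2 hyz)
    rw [add_sub_cancel, show x - (z - y) = x + y - z by ring] at hconv
    simp only [wkeKernel, max_eq_left hpos]
    exact mul_nonneg (by positivity) (by linarith)

lemma secondDiff_div_le_cyclicSum_wkeKernel (hε : 0 < ε) {x y z : ℝ} (hx : 0 < x) (hxy : x ≤ y)
    (hyz : y ≤ z) :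
    (phiEps ε (z + (y - x)) + phiEps ε (z - (y - x)) - 2 * phiEps ε z) / (√y * √z)
      ≤ cyclicSum (wkeKernel ε) (x, y, z) := by
  have hxyz := wkeKernel_nonneg_of_le_of_le hε hxy hyz
  have hyzx := wkeKernel_of_third_le (ε := ε) hx hxy (hxy.trans hyz)
  have hzxy := wkeKernel_of_first_le (ε := ε) hx hxy hyz
  rw [cyclicSum_apply, hyzx, wkeKernel_swap ε x z y, hzxy, show y + z - x = z + (y - x) by ring,
    show x + z - y = z - (y - x) by ring]
  refine le_of_eq_of_le ?_ (add_le_add_left (le_add_of_nonneg_left hxyz) _)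
  ring

lemma cyclicSum_wkeKernel_nonneg (hε : 0 < ε) {x y z : ℝ} (hx : 0 < x) (hy : 0 < y) (hz : 0 < z) :
    0 ≤ cyclicSum (wkeKernel ε) (x, y, z) := by
  have of_ordered {u v w : ℝ} (hu : 0 < u) (huv : u ≤ v) (hvw : v ≤ w) :
      0 ≤ cyclicSum (wkeKernel ε) (u, v, w) := by
    have hconv := add_le_add_of_convexOn (convexOn_phiEps hε) (x := w) (mem_univ _) (mem_univ _)
      le_rfl (sub_nonneg.2 huv)
    refine le_trans (div_nonneg ?_ (by positivity))
      (secondDiff_div_le_cyclicSum_wkeKernel hε hu huv hvw)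
    linarith
  wlog hyz : y ≤ z generalizing y z
  · rw [← cyclicSum_swap (wkeKernel_swap ε)]
    exact this hz hy (le_of_not_ge hyz)
  rcases le_total x y with hxy | hyx
  · exact of_ordered hx hxy hyz
  rcases le_total x z with hxz | hzx
  · rw [← cyclicSum_rotate, ← cyclicSum_swap (wkeKernel_swap ε)]
    exact of_ordered hy hyx hxz
  · rw [← cyclicSum_rotate]
    exact of_ordered hy hyz hzx

lemma le_cyclicSum_wkeKernel (hε : 0 < ε) {θ M x y z : ℝ} (hθ : 0 < θ) (hθ1 : θ ≤ 1)
    (hx : x ∈ Ioc 0 (θ * ε / 4)) (hy : y ∈ Ioc (θ * ε) (M * ε)) (hz : z ∈ Ioc (θ * ε) (M * ε))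
    (hyz : |z - y| ≤ θ * ε / 4) :
    θ ^ 2 / (4 * M * ε) ≤ cyclicSum (wkeKernel ε) (x, y, z) := by
  wlog hle : y ≤ z generalizing y z
  · rw [← cyclicSum_swap (wkeKernel_swap ε)]
    exact this hz hy (abs_sub_comm z y ▸ hyz) (le_of_not_ge hle)
  have hθε : 0 < θ * ε := by positivity
  have hθε1 : θ * ε ≤ ε := mul_le_of_le_one_left hε.le hθ1
  have hx' := hx.2
  have hy' := hy.1
  have hz0 : 0 < z := hθε.trans hz.1
  have hyz' : z - y ≤ θ * ε / 4 := (le_abs_self _).trans hyz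
  have hstep : θ / 2 ≤ (y - x) / ε := by rw [le_div_iff₀ hε]; linarith
  have hdiff : θ ^ 2 / 4 ≤ phiEps ε (z + (y - x)) + phiEps ε (z - (y - x)) - 2 * phiEps ε z := by
    refine le_trans (le_min ?_ ?_)
      (min_le_phiEps_secondDiff hε (by linarith : 0 ≤ y - x) (by linarith))
    · calc θ ^ 2 / 4 = (θ / 2) ^ 2 := by ring
        _ ≤ ((y - x) / ε) ^ 2 := by gcongr
    · nlinarith
  have hweight : √y * √z ≤ M * ε :=
    calc √y * √z ≤ √z * √z := by gcongr
      _ = z := Real.mul_self_sqrt hz0.le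
      _ ≤ M * ε := hz.2
  have hy0 : 0 < y := hθε.trans hy'
  calc θ ^ 2 / (4 * M * ε) = θ ^ 2 / 4 / (M * ε) := by rw [div_div, mul_assoc]
    _ ≤ (phiEps ε (z + (y - x)) + phiEps ε (z - (y - x)) - 2 * phiEps ε z) / (√y * √z) :=
        div_le_div₀ (le_trans (by positivity) hdiff) hdiff (by positivity) hweight
    _ ≤ cyclicSum (wkeKernel ε) (x, y, z) :=
        secondDiff_div_le_cyclicSum_wkeKernel hε hx.1 (by linarith) hle

end Kernel

section CollisionFunctional

/-- The domain of integration `(0,∞)³` of the collision functional. -/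
abbrev posOctant : Set (ℝ × ℝ × ℝ) := Ioi 0 ×ˢ (Ioi 0 ×ˢ Ioi 0)

variable {g : Measure ℝ} [IsFiniteMeasure g] {ε : ℝ}

lemma integrableOn_cyclicSum_wkeKernel
    (hK : IntegrableOn (wkeKernel ε) posOctant (g.prod (g.prod g))) :
    IntegrableOn (cyclicSum (wkeKernel ε)) posOctant (g.prod (g.prod g)) := by
  rw [IntegrableOn, ← Measure.prod_restrict, ← Measure.prod_restrict] at hK ⊢
  exact integrable_cyclicSum hK

lemma setIntegral_cyclicSum_wkeKernel
    (hK : IntegrableOn (wkeKernel ε) posOctant (g.prod (g.prod g))) :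
    ∫ ω in posOctant, cyclicSum (wkeKernel ε) ω ∂(g.prod (g.prod g)) = 3 * Kcoll g ε := by
  rw [IntegrableOn, ← Measure.prod_restrict, ← Measure.prod_restrict] at hK
  rw [Kcoll, ← Measure.prod_restrict, ← Measure.prod_restrict]
  exact integral_cyclicSum hK

lemma cyclicSum_wkeKernel_nonneg_of_mem_posOctant (hε : 0 < ε) :
    ∀ ω ∈ posOctant, 0 ≤ cyclicSum (wkeKernel ε) ω :=
  fun ⟨_, _, _⟩ ⟨hx, hy, hz⟩ => cyclicSum_wkeKernel_nonneg hε hx hy hz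

lemma measurableSet_posOctant : MeasurableSet posOctant :=
  measurableSet_Ioi.prod (measurableSet_Ioi.prod measurableSet_Ioi)

lemma Kcoll_nonneg (hε : 0 < ε)
    (hK : IntegrableOn (wkeKernel ε) posOctant (g.prod (g.prod g))) : 0 ≤ Kcoll g ε := by
  have hsum : 0 ≤ ∫ ω in posOctant, cyclicSum (wkeKernel ε) ω ∂(g.prod (g.prod g)) :=
    setIntegral_nonneg measurableSet_posOctant (cyclicSum_wkeKernel_nonneg_of_mem_posOctant hε)
  rw [setIntegral_cyclicSum_wkeKernel hK] at hsum
  linarith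

lemma mul_measureReal_sq_le_three_mul_Kcoll (hε : 0 < ε)
    (hK : IntegrableOn (wkeKernel ε) posOctant (g.prod (g.prod g)))
    {θ M c d : ℝ} (hθ : 0 < θ) (hθ1 : θ ≤ 1) (hc : θ * ε ≤ c) (hd : d ≤ M * ε)
    (hdc : d - c ≤ θ * ε / 4) :
    θ ^ 2 / (4 * M * ε) * (g.real (Ioc 0 (θ * ε / 4)) * g.real (Ioc c d) ^ 2) ≤ 3 * Kcoll g ε := by
  have hsub : Ioc c d ⊆ Ioc (θ * ε) (M * ε) := Ioc_subset_Ioc hc hd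
  have hpos : Ioc c d ⊆ Ioi 0 := fun y hy => (by positivity : 0 < θ * ε).trans (hsub hy).1
  rw [← setIntegral_cyclicSum_wkeKernel hK, sq (g.real (Ioc c d)), ← measureReal_prod_prod,
    ← measureReal_prod_prod]
  refine mul_measureReal_le_setIntegral
    (measurableSet_Ioc.prod (measurableSet_Ioc.prod measurableSet_Ioc)) measurableSet_posOctant
    (prod_mono Ioc_subset_Ioi_self (prod_mono hpos hpos)) (measure_ne_top _ _)
    (integrableOn_cyclicSum_wkeKernel hK) (cyclicSum_wkeKernel_nonneg_of_mem_posOctant hε) ?_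
  rintro ⟨x, y, z⟩ ⟨hx, hy, hz⟩
  refine le_cyclicSum_wkeKernel hε hθ hθ1 hx (hsub hy) (hsub hz) (le_trans ?_ hdc)
  exact abs_sub_le_of_le_of_le hz.1.le hz.2 hy.1.le hy.2

lemma mul_measureReal_Ioc_mul_sq_le_Kcoll (hε : 0 < ε)
    (hK : IntegrableOn (wkeKernel ε) posOctant (g.prod (g.prod g)))
    {θ M : ℝ} (hθ : 0 < θ) (hθ1 : θ ≤ 1) (hM : 1 ≤ M) :
    θ ^ 4 / (300 * M ^ 3 * ε) *
      (g.real (Ioc 0 (θ * ε / 4)) * g.real (Ioc (θ * ε) (M * ε)) ^ 2) ≤ Kcoll g ε := by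
  have hq : 0 < 4 * M / θ := by positivity
  set n := ⌈4 * M / θ⌉₊
  have hn : 0 < n := Nat.ceil_pos.2 hq
  have hn_ge : 4 * M ≤ n * θ := (div_le_iff₀ hθ).1 (Nat.le_ceil _)
  have hn_le : (n : ℝ) ≤ 5 * M / θ := by
    have hceil := (Nat.ceil_lt_add_one hq.le).le
    have hone : 1 ≤ M / θ := (one_le_div hθ).2 (hθ1.trans hM)
    calc (n : ℝ) ≤ 4 * M / θ + M / θ := hceil.trans (by gcongr)
      _ = 5 * M / θ := by ring
  obtain ⟨c, d, hc, hd, hdc, hmass⟩ := exists_Ioc_measureReal_ge g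
    (mul_le_mul_of_nonneg_right (hθ1.trans hM) hε.le) hn.ne'
  have hwidth : d - c ≤ θ * ε / 4 := by
    rw [hdc, div_le_iff₀ (by positivity)]
    nlinarith [mul_pos hθ hε]
  have hshare : θ / (5 * M) * g.real (Ioc (θ * ε) (M * ε)) ≤ g.real (Ioc c d) :=
    calc θ / (5 * M) * g.real (Ioc (θ * ε) (M * ε))
        = g.real (Ioc (θ * ε) (M * ε)) / (5 * M / θ) := by field_simp
      _ ≤ g.real (Ioc (θ * ε) (M * ε)) / n := by gcongr
      _ ≤ g.real (Ioc c d) := hmass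
  have hwindow := mul_measureReal_sq_le_three_mul_Kcoll hε hK hθ hθ1 hc hd hwidth
  set m₀ := g.real (Ioc 0 (θ * ε / 4))
  set m₁ := g.real (Ioc (θ * ε) (M * ε))
  have hm : θ ^ 2 / (4 * M * ε) * (m₀ * (θ / (5 * M) * m₁) ^ 2) ≤ 3 * Kcoll g ε :=
    le_trans (by gcongr) hwindow
  have hconst : θ ^ 2 / (4 * M * ε) * (m₀ * (θ / (5 * M) * m₁) ^ 2)
      = 3 * (θ ^ 4 / (300 * M ^ 3 * ε) * (m₀ * m₁ ^ 2)) := by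
    field_simp; ring
  linarith

end CollisionFunctional

section N0

variable {g : Measure ℝ} [IsFiniteMeasure g] {ε θ : ℝ}

lemma N0_nonneg (g : Measure ℝ) (ε : ℝ) : 0 ≤ N0 g ε :=
  integral_nonneg fun _ => sq_nonneg _

lemma N0_le_measureReal_Icc (hε : 0 < ε) : N0 g ε ≤ g.real (Icc 0 ε) := by
  have hle_one : ∀ x ∈ Icc 0 ε, ‖(1 - x / ε) ^ 2‖ ≤ 1 := fun x hx => by
    have hx0 : 0 ≤ x / ε := div_nonneg hx.1 hε.le
    have hx1 : x / ε ≤ 1 := (div_le_one hε).2 hx.2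
    rw [Real.norm_of_nonneg (sq_nonneg _)]
    exact pow_le_one₀ (by linarith) (by linarith)
  have hnorm := norm_setIntegral_le_of_norm_le_const (measure_lt_top g _) hle_one
  rw [one_mul] at hnorm
  exact (le_abs_self _).trans hnorm

lemma N0_le_measureReal_Ioc (h0 : g {0} = 0) (hε : 0 < ε) : N0 g ε ≤ g.real (Ioc 0 ε) := by
  refine (N0_le_measureReal_Icc hε).trans_eq (measureReal_congr ?_)
  rw [← Icc_sdiff_left]
  exact (sdiff_null_ae_eq_self h0).symm

lemma sq_mul_measureReal_Icc_le_N0 (hε : 0 < ε) (hθ1 : θ ≤ 1) :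
    (1 - θ) ^ 2 * g.real (Icc 0 (θ * ε)) ≤ N0 g ε := by
  refine mul_measureReal_le_setIntegral measurableSet_Icc measurableSet_Icc
    (Icc_subset_Icc_right (mul_le_of_le_one_left hε.le hθ1)) (measure_ne_top _ _)
    (ContinuousOn.integrableOn_compact isCompact_Icc (by fun_prop))
    (fun _ _ => sq_nonneg _) fun x hx => ?_
  have hxθ : x / ε ≤ θ := (div_le_iff₀ hε).2 hx.2
  gcongr

lemma tendsto_N0_nhdsGT_zero (g : Measure ℝ) [IsFiniteMeasure g] :
    Filter.Tendsto (N0 g) (𝓝[>] 0) (𝓝 (g.real {0})) := by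
  have hIcc : Filter.Tendsto (fun ε => g.real (Icc (0 - ε) (0 + ε))) (𝓝[>] 0)
      (𝓝 (g.real {0})) :=
    (ENNReal.tendsto_toReal (measure_ne_top _ _)).comp
      (tendsto_measure_Icc_nhdsWithin_right' g 0)
  refine tendsto_of_tendsto_of_tendsto_of_le_of_le' tendsto_const_nhds hIcc ?_ ?_
  · filter_upwards [self_mem_nhdsWithin] with ε hε
    simpa using sq_mul_measureReal_Icc_le_N0 (g := g) hε zero_le_one
  · filter_upwards [self_mem_nhdsWithin] with ε hε
    have hε0 : 0 < ε := hε
    exact (N0_le_measureReal_Icc hε).trans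
      (measureReal_mono (Icc_subset_Icc (by linarith) (by linarith)))

end N0

section SqrtMassBound

/-- The bound `\underline{N}_{1/2}(g, b) ≥ a`, spelled out with the real-valued `N₀`; it is what
the evolution propagates to smaller scales with larger constants. -/
def SqrtMassBound (g : Measure ℝ) (a b : ℝ) : Prop :=
  ∀ δ ∈ Ioc 0 b, a * √δ ≤ N0 g δ

lemma SqrtMassBound.mono {g : Measure ℝ} {a b b' : ℝ} (h : SqrtMassBound g a b) (hb : b' ≤ b) :
    SqrtMassBound g a b' :=
  fun δ hδ => h δ ⟨hδ.1, hδ.2.trans hb⟩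

lemma sqrtMassBound_of_density_le {g : Measure ℝ} [IsFiniteMeasure g] {A B : ℝ} (hA : 0 ≤ A)
    (h : ∀ E : Set ℝ, MeasurableSet E →
      ENNReal.ofReal A * (∫⁻ x in E ∩ Ioo (0:ℝ) B, ENNReal.ofReal (x ^ (-(1/2) : ℝ))) ≤ g E) :
    SqrtMassBound g (A / 8) B := by
  rintro δ ⟨hδ, hδB⟩
  have hsub : Ioc 0 (1 / 2 * δ) ⊆ Icc 0 (1 / 2 * δ) ∩ Ioo 0 B := fun x hx =>
    ⟨Ioc_subset_Icc_self hx, hx.1, by have := hx.2; linarith⟩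
  have hdensity : ENNReal.ofReal (√δ / 2) ≤
      ∫⁻ x in Icc 0 (1 / 2 * δ) ∩ Ioo 0 B, ENNReal.ofReal (x ^ (-(1/2) : ℝ)) :=
    calc ENNReal.ofReal (√δ / 2)
        = ENNReal.ofReal (δ ^ (-(1/2) : ℝ)) * volume (Ioc 0 (1 / 2 * δ)) := by
          rw [Real.volume_Ioc, ← ENNReal.ofReal_mul (by positivity), Real.rpow_neg hδ.le,
            ← Real.sqrt_eq_rpow, sub_zero, mul_left_comm, inv_mul_eq_div, Real.div_sqrt,
            one_div_mul_eq_div]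
      _ = ∫⁻ _ in Ioc 0 (1 / 2 * δ), ENNReal.ofReal (δ ^ (-(1/2) : ℝ)) :=
          (setLIntegral_const _ _).symm
      _ ≤ ∫⁻ x in Ioc 0 (1 / 2 * δ), ENNReal.ofReal (x ^ (-(1/2) : ℝ)) := by
          refine setLIntegral_mono' measurableSet_Ioc fun x hx => ENNReal.ofReal_le_ofReal ?_
          exact Real.rpow_le_rpow_of_nonpos hx.1 (by have := hx.2; linarith) (by norm_num)
      _ ≤ _ := lintegral_mono_set hsub
  have hmass : A * (√δ / 2) ≤ g.real (Icc 0 (1 / 2 * δ)) := by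
    rw [measureReal_def, ← ENNReal.ofReal_le_iff_le_toReal (measure_ne_top _ _),
      ENNReal.ofReal_mul hA]
    exact (mul_le_mul_right hdensity _).trans (h _ measurableSet_Icc)
  have hN0 := sq_mul_measureReal_Icc_le_N0 (g := g) (θ := 1 / 2) hδ (by norm_num)
  linarith

variable {g : Measure ℝ} [IsFiniteMeasure g] {δ η a : ℝ}

lemma le_measureReal_Ioc_of_sqrt_le_N0 (h0 : g {0} = 0) (hδ : 0 < δ) (hη : 0 < η) (hη1 : η ≤ 1)
    (ha : 0 ≤ a) (h : a * √(η * δ / 64) ≤ N0 g (η * δ / 64)) :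
    η * a * √δ / 8 ≤ g.real (Ioc 0 (η * δ / 64)) := by
  have hsqrt : η * √δ / 8 ≤ √(η * δ / 64) := by
    apply Real.le_sqrt_of_sq_le
    rw [div_pow, mul_pow, Real.sq_sqrt hδ.le]
    nlinarith [mul_pos hη hδ]
  calc η * a * √δ / 8 = a * (η * √δ / 8) := by ring
    _ ≤ a * √(η * δ / 64) := by gcongr
    _ ≤ g.real (Ioc 0 (η * δ / 64)) := h.trans (N0_le_measureReal_Ioc h0 (by positivity))

lemma le_measureReal_annulus_of_N0_le (hδ : 0 < δ) (hη : 0 < η) (hη1 : η ≤ 1) (ha : 0 ≤ a)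
    (hinner : N0 g δ ≤ 16 * a * √δ)
    (houter : a * √(256 * (1 + η) * δ) ≤ N0 g (256 * (1 + η) * δ)) :
    2 * η * a * √δ ≤ g.real (Ioc (η / 16 * δ) (256 * (1 + η) * δ)) := by
  have hsplit : g.real (Icc 0 (256 * (1 + η) * δ)) ≤
      g.real (Icc 0 (η / 16 * δ)) + g.real (Ioc (η / 16 * δ) (256 * (1 + η) * δ)) := by
    rw [← Icc_union_Ioc_eq_Icc (b := η / 16 * δ) (by positivity) (by gcongr; linarith)]
    exact measureReal_union_le _ _
  have hsqrt : 16 * (1 + η / 3) * √δ ≤ √(256 * (1 + η) * δ) := by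
    apply Real.le_sqrt_of_sq_le
    rw [mul_pow, Real.sq_sqrt hδ.le]
    gcongr
    nlinarith
  have hball_outer : a * (16 * (1 + η / 3) * √δ) ≤ g.real (Icc 0 (256 * (1 + η) * δ)) :=
    (mul_le_mul_of_nonneg_left hsqrt ha).trans
      (houter.trans (N0_le_measureReal_Icc (by positivity)))
  have hball_inner : g.real (Icc 0 (η / 16 * δ)) ≤ (1 + η / 6) * (16 * a * √δ) := by
    have hfactor : 1 ≤ (1 + η / 6) * (1 - η / 16) ^ 2 := by nlinarith [mul_pos hη hη]
    have hN0 := (sq_mul_measureReal_Icc_le_N0 (g := g) (θ := η / 16) hδ (by linarith)).trans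
      hinner
    calc g.real (Icc 0 (η / 16 * δ))
        ≤ (1 + η / 6) * (1 - η / 16) ^ 2 * g.real (Icc 0 (η / 16 * δ)) :=
          le_mul_of_one_le_left measureReal_nonneg hfactor
      _ = (1 + η / 6) * ((1 - η / 16) ^ 2 * g.real (Icc 0 (η / 16 * δ))) := mul_assoc _ _ _
      _ ≤ (1 + η / 6) * (16 * a * √δ) := by gcongr
  have : 0 ≤ η * a * √δ := by positivity
  linarith

lemma le_Kcoll_of_N0_le (h0 : g {0} = 0) (hδ : 0 < δ) (hη : 0 < η) (hη1 : η ≤ 1) (ha : 0 ≤ a)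
    (hK : IntegrableOn (wkeKernel δ) posOctant (g.prod (g.prod g)))
    (hinner : N0 g δ ≤ 16 * a * √δ) (hbound : SqrtMassBound g a (256 * (1 + η) * δ)) :
    η ^ 7 * a ^ 3 * √δ / 10 ^ 16 ≤ Kcoll g δ := by
  have hcenter := le_measureReal_Ioc_of_sqrt_le_N0 h0 hδ hη hη1 ha
    (hbound _ ⟨by positivity, by nlinarith [mul_pos hη hδ]⟩)
  have hannulus : 2 * η * a * √δ ≤ g.real (Ioc (η / 16 * δ) (512 * δ)) :=
    (le_measureReal_annulus_of_N0_le hδ hη hη1 ha hinner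
      (hbound _ ⟨by positivity, le_rfl⟩)).trans
      (measureReal_mono (Ioc_subset_Ioc_right (by gcongr; linarith)))
  rw [show η * δ / 64 = η / 16 * δ / 4 by ring] at hcenter
  have hsq : √δ ^ 2 = δ := Real.sq_sqrt hδ.le
  have : 0 ≤ η ^ 7 * a ^ 3 * √δ := by positivity
  calc η ^ 7 * a ^ 3 * √δ / 10 ^ 16
      ≤ η ^ 7 * a ^ 3 * √δ / (300 * 2 ^ 44) := by gcongr; norm_num
    _ = (η / 16) ^ 4 / (300 * 512 ^ 3 * δ) * ((η * a * √δ / 8) * (2 * η * a * √δ) ^ 2) := by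
        rw [mul_pow _ (√δ), hsq]; field_simp; ring
    _ ≤ (η / 16) ^ 4 / (300 * 512 ^ 3 * δ) *
        (g.real (Ioc 0 (η / 16 * δ / 4)) * g.real (Ioc (η / 16 * δ) (512 * δ)) ^ 2) := by
        gcongr
    _ ≤ Kcoll g δ := mul_measureReal_Ioc_mul_sq_le_Kcoll hδ hK (by positivity) (by linarith)
        (by norm_num)

end SqrtMassBound

/-- A weak solution of the 4-wave kinetic equation: a family of finite measures satisfying the
weak formulation for the test functions `φ_ε`. -/
structure IsWeakSolution (g : ℝ → Measure ℝ) : Prop where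
  isFiniteMeasure : ∀ t, 0 ≤ t → IsFiniteMeasure (g t)
  integrableOn_wkeKernel : ∀ ε, 0 < ε → ∀ t, 0 ≤ t →
    IntegrableOn (wkeKernel ε) posOctant ((g t).prod ((g t).prod (g t)))
  integrableOn_Kcoll : ∀ ε, 0 < ε → ∀ t, 0 < t → IntegrableOn (fun τ => Kcoll (g τ) ε) (Icc 0 t)
  N0_sub_N0 : ∀ ε, 0 < ε → ∀ s t, 0 ≤ s → s < t →
    N0 (g t) ε - N0 (g s) ε = ∫ τ in s..t, Kcoll (g τ) ε

namespace IsWeakSolution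

variable {g : ℝ → Measure ℝ} (hg : IsWeakSolution g) {s t a b : ℝ}
include hg

lemma mul_le_N0_sub_N0 {ε c : ℝ} (hε : 0 < ε) (hs : 0 ≤ s) (hst : s < t)
    (hc : ∀ τ ∈ Icc s t, c ≤ Kcoll (g τ) ε) : (t - s) * c ≤ N0 (g t) ε - N0 (g s) ε := by
  have hKint : IntervalIntegrable (fun τ => Kcoll (g τ) ε) volume s t := by
    rw [intervalIntegrable_iff_integrableOn_Icc_of_le hst.le]
    exact (hg.integrableOn_Kcoll ε hε t (hs.trans_lt hst)).mono_set (Icc_subset_Icc_left hs)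
  rw [hg.N0_sub_N0 ε hε s t hs hst]
  simpa using intervalIntegral.integral_mono_on hst.le intervalIntegrable_const hKint hc

lemma N0_le_N0 {ε : ℝ} (hε : 0 < ε) (hs : 0 ≤ s) (hst : s ≤ t) : N0 (g s) ε ≤ N0 (g t) ε := by
  rcases hst.eq_or_lt with rfl | hst
  · exact le_rfl
  have hKcoll : ∀ τ ∈ Icc s t, 0 ≤ Kcoll (g τ) ε := fun τ hτ =>
    have hτ0 := hs.trans hτ.1
    have := hg.isFiniteMeasure τ hτ0
    Kcoll_nonneg hε (hg.integrableOn_wkeKernel ε hε τ hτ0)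
  simpa using hg.mul_le_N0_sub_N0 hε hs hst hKcoll

lemma measure_singleton_zero_eq_zero_of_le (hs : 0 ≤ s) (hst : s ≤ t) (ht : g t {0} = 0) :
    g s {0} = 0 := by
  have := hg.isFiniteMeasure s hs
  have := hg.isFiniteMeasure t (hs.trans hst)
  have hle : (g s).real {0} ≤ (g t).real {0} :=
    le_of_tendsto_of_tendsto (tendsto_N0_nhdsGT_zero (g s)) (tendsto_N0_nhdsGT_zero (g t)) <| by
      filter_upwards [self_mem_nhdsWithin] with ε hε using hg.N0_le_N0 hε hs hst
  rw [measureReal_def (g t), ht, ENNReal.toReal_zero] at hle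
  exact (measureReal_eq_zero_iff).1 (hle.antisymm measureReal_nonneg)

lemma sqrtMassBound_of_le (hs : 0 ≤ s) (hst : s ≤ t) (h : SqrtMassBound (g s) a b) :
    SqrtMassBound (g t) a b :=
  fun δ hδ => (h δ hδ).trans (hg.N0_le_N0 hδ.1 hs hst)

lemma sqrtMassBound_step {η : ℝ} (hs : 0 ≤ s) (hst : s < t) (ha : 0 < a) (hη : 0 < η)
    (hη1 : η ≤ 1) (h0 : ∀ τ ∈ Icc s t, g τ {0} = 0) (h : SqrtMassBound (g s) a b)
    (hlong : 16 * 10 ^ 16 ≤ (t - s) * (η ^ 7 * a ^ 2)) :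
    SqrtMassBound (g t) (16 * a) (b / (256 * (1 + η))) := by
  rintro δ ⟨hδ, hδb⟩
  rw [le_div_iff₀' (by positivity)] at hδb
  by_contra! hlt
  have hrate : ∀ τ ∈ Icc s t, η ^ 7 * a ^ 3 * √δ / 10 ^ 16 ≤ Kcoll (g τ) δ := fun τ hτ =>
    have hτ0 := hs.trans hτ.1
    have := hg.isFiniteMeasure τ hτ0
    le_Kcoll_of_N0_le (h0 τ hτ) hδ hη hη1 ha.le (hg.integrableOn_wkeKernel δ hδ τ hτ0)
      ((hg.N0_le_N0 hδ hτ0 hτ.2).trans hlt.le)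
      ((hg.sqrtMassBound_of_le hs hτ.1 h).mono hδb)
  have hgain : 16 * a * √δ ≤ N0 (g t) δ :=
    calc 16 * a * √δ = 16 * 10 ^ 16 * (a * √δ / 10 ^ 16) := by ring
      _ ≤ (t - s) * (η ^ 7 * a ^ 2) * (a * √δ / 10 ^ 16) := by gcongr
      _ = (t - s) * (η ^ 7 * a ^ 3 * √δ / 10 ^ 16) := by ring
      _ ≤ N0 (g t) δ - N0 (g s) δ := hg.mul_le_N0_sub_N0 hδ hs hst hrate
      _ ≤ N0 (g t) δ := sub_le_self _ (N0_nonneg _ _)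
  exact hgain.not_gt hlt

/-- Since `16 = √256` and the factors `1 + p / 4` have a convergent product, the level `a √b` stays
bounded below along the iteration. -/
lemma sqrtMassBound_iterate {T : ℝ} (ha : 0 < a) (hb : 0 ≤ b) (h0 : ∀ τ ∈ Icc 0 T, g τ {0} = 0)
    (h : SqrtMassBound (g 0) a b) (hT : 2 ^ 19 * 10 ^ 16 / a ^ 2 ≤ T) (k : ℕ) :
    SqrtMassBound (g (T * (1 - (1 / 2) ^ k))) (16 ^ k * a)
      (b / 2 * ((1 / 256) ^ k * (1 + (1 / 2) ^ k))) := by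
  have hT0 : 0 < T := lt_of_lt_of_le (by positivity) hT
  rw [div_le_iff₀ (by positivity)] at hT
  induction k with
  | zero => simpa [one_add_one_eq_two] using h
  | succ k ih =>
    have hp0 : (0 : ℝ) < (1 / 2) ^ k := by positivity
    have hp1 : ((1 : ℝ) / 2) ^ k ≤ 1 := pow_le_one₀ (by norm_num) (by norm_num)
    have hpq : (((1 : ℝ) / 2) ^ k) ^ 8 * (16 ^ k) ^ 2 = 1 := by
      rw [← pow_mul, ← pow_mul, mul_comm k 8, mul_comm k 2, pow_mul, pow_mul, ← mul_pow]
      norm_num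
    simp only [pow_succ _ k, mul_comm _ (16 : ℝ), mul_assoc (16 : ℝ)]
    set p : ℝ := (1 / 2) ^ k
    set q : ℝ := (1 / 256) ^ k
    have hs : 0 ≤ T * (1 - p) := mul_nonneg hT0.le (by linarith)
    have hst : T * (1 - p) < T * (1 - p * (1 / 2)) := by gcongr; linarith
    have hlong : 16 * 10 ^ 16
        ≤ (T * (1 - p * (1 / 2)) - T * (1 - p)) * ((p / 4) ^ 7 * (16 ^ k * a) ^ 2) := by
      have : (T * (1 - p * (1 / 2)) - T * (1 - p)) * ((p / 4) ^ 7 * (16 ^ k * a) ^ 2)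
          = T * a ^ 2 / 2 ^ 15 := by
        linear_combination T * a ^ 2 / 2 ^ 15 * hpq
      rw [this]; linarith
    have hscale : b / 2 * (q * (1 / 256) * (1 + p * (1 / 2)))
        ≤ b / 2 * (q * (1 + p)) / (256 * (1 + p / 4)) := by
      rw [le_div_iff₀ (by positivity)]
      calc b / 2 * (q * (1 / 256) * (1 + p * (1 / 2))) * (256 * (1 + p / 4))
          = b / 2 * (q * ((1 + p / 2) * (1 + p / 4))) := by ring
        _ ≤ b / 2 * (q * (1 + p)) := by gcongr; nlinarith
    refine (hg.sqrtMassBound_step hs hst (by positivity) (by positivity) (by linarith)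
      (fun τ hτ => h0 τ ⟨hs.trans hτ.1, hτ.2.trans ?_⟩) ih hlong).mono hscale
    exact mul_le_of_le_one_right hT0.le (by linarith)

lemma measure_singleton_zero_pos (ha : 0 < a) (hb : 0 < b) (h : SqrtMassBound (g 0) a b)
    (ht : 2 ^ 19 * 10 ^ 16 / a ^ 2 ≤ t) : 0 < g t {0} := by
  have ht0 : 0 ≤ t := le_trans (by positivity) ht
  have := hg.isFiniteMeasure t ht0
  by_contra! hle
  have hatom : g t {0} = 0 := le_antisymm hle zero_le
  have h0 : ∀ τ ∈ Icc 0 t, g τ {0} = 0 := fun τ hτ =>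
    hg.measure_singleton_zero_eq_zero_of_le hτ.1 hτ.2 hatom
  have hlower (k : ℕ) : a * √(b / 2) ≤ N0 (g t) (b / 2 * (1 / 256) ^ k) := by
    have hp0 : (0 : ℝ) < (1 / 2) ^ k := by positivity
    have hp1 : ((1 : ℝ) / 2) ^ k ≤ 1 := pow_le_one₀ (by norm_num) (by norm_num)
    have hk := hg.sqrtMassBound_of_le (mul_nonneg ht0 (by linarith))
      (mul_le_of_le_one_right ht0 (by linarith)) (hg.sqrtMassBound_iterate ha hb.le h0 h ht k)
    have hsqrt : 16 ^ k * √((1 / 256 : ℝ) ^ k) = 1 := by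
      rw [show (1 / 256 : ℝ) = (1 / 16) ^ 2 by norm_num, pow_right_comm,
        Real.sqrt_sq (by positivity), ← mul_pow]
      norm_num
    calc a * √(b / 2) = 16 ^ k * a * √(b / 2 * (1 / 256) ^ k) := by
          rw [Real.sqrt_mul (by positivity)]; linear_combination -(a * √(b / 2)) * hsqrt
      _ ≤ N0 (g t) (b / 2 * (1 / 256) ^ k) := hk _ ⟨by positivity, by
          gcongr; exact le_mul_of_one_le_right (by positivity) (by linarith)⟩
  have hscales : Filter.Tendsto (fun k : ℕ => b / 2 * (1 / 256) ^ k) Filter.atTop (𝓝[>] 0) := by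
    have hpow : Filter.Tendsto (fun k : ℕ => (1 / 256 : ℝ) ^ k) Filter.atTop (𝓝 0) :=
      tendsto_pow_atTop_nhds_zero_of_lt_one (by norm_num) (by norm_num)
    refine tendsto_nhdsWithin_iff.2 ⟨by simpa using hpow.const_mul (b / 2), ?_⟩
    exact Filter.Eventually.of_forall fun k => mem_Ioi.2 (by positivity)
  have hlimit : a * √(b / 2) ≤ (g t).real {0} :=
    ge_of_tendsto' ((tendsto_N0_nhdsGT_zero (g t)).comp hscales) hlower
  rw [measureReal_def, hatom, ENNReal.toReal_zero] at hlimit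
  exact hlimit.not_gt (by positivity)

end IsWeakSolution

theorem stmt5_general : ∃ C : ℝ, 0 < C ∧
    ∀ a b : ℝ, 0 < a → 0 < b → ∀ g : ℝ → Measure ℝ, IsWeakSolution g →
    SqrtMassBound (g 0) a b → ∀ t : ℝ, C / a ^ 2 < t → 0 < g t {0} :=
  ⟨2 ^ 19 * 10 ^ 16, by positivity, fun _ _ ha hb _ hg h _ ht =>
    hg.measure_singleton_zero_pos ha hb h ht.le⟩

theorem stmt5 : ∃ C : ℝ, 0 < C ∧
    ∀ (A B : ℝ), 0 < A → 0 < B → ∀ g : ℝ → Measure ℝ,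
    (∀ t : ℝ, 0 ≤ t → IsFiniteMeasure (g t)) →
    (∀ t : ℝ, 0 ≤ t → g t (Iio (0:ℝ)) = 0) →
    -- (a) the initial datum dominates the measure with density `A x^{-1/2}` on `(0,B)`
    (∀ E : Set ℝ, MeasurableSet E →
      ENNReal.ofReal A *
        (∫⁻ x in E ∩ Ioo (0:ℝ) B, ENNReal.ofReal (x ^ (-(1/2) : ℝ))) ≤ g 0 E) →
    -- (b) conservation of the total mass
    (∀ t : ℝ, 0 ≤ t → g t univ = g 0 univ) →
    -- (c) the weak formulation of the equation for the test functions `φ_ε`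
    (∀ ε : ℝ, 0 < ε →
      (∀ τ : ℝ, 0 ≤ τ → Integrable (wkeKernel ε)
        (((g τ).prod ((g τ).prod (g τ))).restrict
          ((Ioi (0:ℝ)) ×ˢ ((Ioi (0:ℝ)) ×ˢ (Ioi (0:ℝ)))))) ∧
      (∀ t : ℝ, 0 < t → IntegrableOn (fun τ => Kcoll (g τ) ε) (Icc (0:ℝ) t)) ∧
      (∀ s t : ℝ, 0 ≤ s → s < t →
        N0 (g t) ε - N0 (g s) ε = ∫ τ in s..t, Kcoll (g τ) ε)) →
    ∀ t : ℝ, C / A ^ 2 < t → 0 < g t ({0} : Set ℝ) := by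
  obtain ⟨C, hC, condense⟩ := stmt5_general
  refine ⟨C * 8 ^ 2, by positivity, fun A B hA hB g hfin _ hinit _ hweak t ht => ?_⟩
  have := hfin 0 le_rfl
  have hg : IsWeakSolution g := ⟨hfin, fun ε hε => (hweak ε hε).1, fun ε hε => (hweak ε hε).2.1,
    fun ε hε => (hweak ε hε).2.2⟩
  exact condense (A / 8) B (by positivity) hB g hg (sqrtMassBound_of_density_le hA.le hinit) t
    (by rwa [div_pow, div_div_eq_mul_div])
end

section
/- Let C₀ > 0 and let K : ℝ → ℝ be twice continuously differentiable on ℝ∖{0} such that: |K(x)| + |K'(x)| + |K''(x)| ≤ C₀ (1+|x|) e^{x} for x ≤ −2; |K(x)| + |K'(x)| + |K''(x)| ≤ C₀ (1+|x|) e^{−5x/2} for x ≥ 2; |K(x) − π |x|^{−1/2}| ≤ C₀ |x|^{1/2} and |K'(x) + (π/2) sign(x) |x|^{−3/2}| ≤ C₀ |x|^{−1/2} for 0 < |x| ≤ 2. Define K̂(ξ) = ∫_ℝ K(x) e^{−ixξ} dx for Im ξ ∈ (−1, 5/2). Then for every compact interval I ⊂ (−1, 5/2) there exists C_I > 0 such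 that |K̂(ξ)| ≤ C_I (1 + |ξ|)^{−1/2} for all ξ ∈ ℂ with Im ξ ∈ I. -/
open MeasureTheory Set

/-!
Reflect the negative half-line, so that each half of the Fourier–Laplace integral becomes
`∫₀^∞ exp (z x) f x dx` with `Re z` bounded above by a rate smaller than the decay rate of `f`.
Cut this integral at distance `1 / (1 + ‖z‖)` from the singularity. On the near part the size
`x⁻ˢ` of `f` alone gives `(1 + ‖z‖) ^ (s - 1)`. On the far part one integration by parts gains a
factor `‖z‖⁻¹`, while the boundary term and the integral of `f' = O(x⁻ˢ⁻¹)` both cost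
`(1 + ‖z‖) ^ s`.
-/

open Filter Asymptotics Topology

section Asymptotics

variable {E F : Type*} [NormedAddCommGroup E] [NormedAddCommGroup F]

lemma isBigO_principal_Icc_of_continuousOn {f : ℝ → E} {g : ℝ → F} {a b : ℝ}
    (hf : ContinuousOn f (Icc a b)) (hg : ContinuousOn g (Icc a b))
    (hg₀ : ∀ x ∈ Icc a b, g x ≠ 0) : f =O[𝓟 (Icc a b)] g := by
  have hf₁ : f =O[𝓟 (Icc a b)] fun _ => (1 : ℝ) :=
    hf.isBigO_principal isCompact_Icc (by simp)
  exact hf₁.trans (hg.isBigO_rev_principal isCompact_Icc hg₀ 1)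

lemma isBigO_principal_Ioi_of_continuousOn {f : ℝ → E} {g : ℝ → F} {a : ℝ}
    (hf : ContinuousOn f (Ioi a)) (hg : ContinuousOn g (Ioi a)) (hg₀ : ∀ x ∈ Ioi a, g x ≠ 0)
    (hnhds : f =O[𝓝[>] a] g) (htop : f =O[atTop] g) : f =O[𝓟 (Ioi a)] g := by
  obtain ⟨c₁, hc₁⟩ := hnhds.bound
  obtain ⟨c₂, hc₂⟩ := htop.bound
  obtain ⟨u, hau : a < u, hu⟩ := mem_nhdsGT_iff_exists_Ioo_subset.1 hc₁
  obtain ⟨N, hN⟩ := mem_atTop_sets.1 hc₂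
  have hsub : Icc u N ⊆ Ioi a := fun x hx => hau.trans_le hx.1
  have hleft : f =O[𝓟 (Ioo a u)] g := isBigO_principal.2 ⟨c₁, fun x hx => hu hx⟩
  have hmiddle : f =O[𝓟 (Icc u N)] g := isBigO_principal_Icc_of_continuousOn
    (hf.mono hsub) (hg.mono hsub) fun x hx => hg₀ x (hsub hx)
  have hright : f =O[𝓟 (Ici N)] g := isBigO_principal.2 ⟨c₂, fun x hx => hN x hx⟩
  have hcover : Ioi a ⊆ Ioo a u ∪ Icc u N ∪ Ici N := fun x hx => by
    rcases lt_or_ge x u with hxu | hxu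
    · exact .inl (.inl ⟨hx, hxu⟩)
    · exact (le_total x N).imp (fun h => .inr ⟨hxu, h⟩) id
  refine ((hleft.sup hmiddle).sup hright).mono ?_
  simpa only [sup_principal, principal_mono] using hcover

lemma isBigO_exp_smul_rpow_principal_Ioi [NormedSpace ℝ E] {f : ℝ → E} {d r t : ℝ} (hdr : d < r)
    (hf : ContinuousOn f (Ioi 0)) (hnhds : f =O[𝓝[>] 0] fun x => x ^ t)
    (htop : f =O[atTop] fun x => Real.exp (-r * x)) :
    (fun x => Real.exp (d * x) • f x) =O[𝓟 (Ioi 0)] fun x => x ^ t := by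
  have hexp : Continuous fun x : ℝ => Real.exp (d * x) := by fun_prop
  refine isBigO_principal_Ioi_of_continuousOn (hexp.continuousOn.smul hf)
    (fun x hx => (Real.continuousAt_rpow_const x t (.inl hx.ne')).continuousWithinAt)
    (fun x hx => (Real.rpow_pos_of_pos hx t).ne') ?_ ?_
  · have hexp₀ : (fun x : ℝ => Real.exp (d * x)) =O[𝓝[>] 0] fun _ => (1 : ℝ) :=
      (hexp.tendsto 0).isBigO_one ℝ |>.mono nhdsWithin_le_nhds
    simpa only [one_smul] using hexp₀.smul hnhds
  · have hdecay : (fun x => Real.exp (d * x) • f x) =O[atTop] fun x => Real.exp (-(r - d) * x) :=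
      ((isBigO_refl (fun x : ℝ => Real.exp (d * x)) atTop).smul htop).congr_right fun x => by
        rw [smul_eq_mul, ← Real.exp_add]
        ring_nf
    exact hdecay.trans (isLittleO_exp_neg_mul_rpow_atTop (sub_pos.2 hdr) t).isBigO

lemma isBigO_abs_rpow_nhdsNE_zero_of_le {a b : ℝ} (hab : a ≤ b) (hb : b ≠ 0) :
    (fun x : ℝ => |x| ^ b) =O[𝓝[≠] 0] fun x => |x| ^ a := by
  have habs : Tendsto (fun x : ℝ => |x|) (𝓝[≠] 0) (𝓝[≥] 0) :=
    tendsto_nhdsWithin_iff.2 ⟨(continuous_abs.tendsto' 0 0 abs_zero).mono_left nhdsWithin_le_nhds,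
      .of_forall fun x => abs_nonneg x⟩
  exact (IsBigO.rpow_rpow_nhdsGE_zero_of_le hab hb).comp_tendsto habs

lemma isBigO_abs_rpow_nhdsNE_zero_of_norm_sub_le {f g : ℝ → E} {C δ a b : ℝ} (hδ : 0 < δ)
    (hab : a ≤ b) (hb : b ≠ 0) (hfg : ∀ x ≠ 0, |x| ≤ δ → ‖f x - g x‖ ≤ C * |x| ^ b)
    (hg : g =O[𝓝[≠] 0] fun x => |x| ^ a) : f =O[𝓝[≠] 0] fun x => |x| ^ a := by
  have hsub : (fun x => f x - g x) =O[𝓝[≠] 0] fun x => |x| ^ b := by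
    refine .of_bound C ?_
    filter_upwards [self_mem_nhdsWithin, nhdsWithin_le_nhds (Metric.closedBall_mem_nhds 0 hδ)]
      with x hx hxδ
    rw [Real.norm_of_nonneg (Real.rpow_nonneg (abs_nonneg x) b)]
    exact hfg x hx (by simpa using hxδ)
  simpa only [sub_add_cancel] using
    (hsub.trans (isBigO_abs_rpow_nhdsNE_zero_of_le hab hb)).add hg

lemma abs_sign_le_one (x : ℝ) : |Real.sign x| ≤ 1 := by
  rcases Real.sign_apply_eq x with h | h | h <;> simp [h]

lemma isBigO_one_add_abs_mul_exp_atTop {r q : ℝ} (hrq : r < q) :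
    (fun x : ℝ => (1 + |x|) * Real.exp (-q * x)) =O[atTop] fun x => Real.exp (-r * x) := by
  have hone : (fun x : ℝ => Real.exp (-q * x) * x ^ (0 : ℝ)) =O[atTop] _ :=
    (isLittleO_exp_mul_rpow_of_lt 0 (neg_lt_neg hrq)).isBigO
  have hid : (fun x : ℝ => Real.exp (-q * x) * x ^ (1 : ℝ)) =O[atTop] _ :=
    (isLittleO_exp_mul_rpow_of_lt 1 (neg_lt_neg hrq)).isBigO
  refine (hone.add hid).congr' ?_ .rfl
  filter_upwards [eventually_ge_atTop 0] with x hx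
  rw [Real.rpow_zero, Real.rpow_one, abs_of_nonneg hx]
  ring

lemma isBigO_atTop_exp_of_norm_le {f : ℝ → E} {C δ r q : ℝ} (hrq : r < q)
    (hf : ∀ x ≥ δ, ‖f x‖ ≤ C * ((1 + |x|) * Real.exp (-q * x))) :
    f =O[atTop] fun x => Real.exp (-r * x) := by
  refine IsBigO.trans (.of_bound C ?_) (isBigO_one_add_abs_mul_exp_atTop hrq)
  filter_upwards [eventually_ge_atTop δ] with x hx
  rw [Real.norm_of_nonneg (by positivity)]
  exact hf x hx

lemma isBigO_atBot_exp_of_norm_le {f : ℝ → E} {C δ p q : ℝ} (hqp : q < p)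
    (hf : ∀ x ≤ -δ, ‖f x‖ ≤ C * ((1 + |x|) * Real.exp (-q * x))) :
    f =O[atBot] fun x => Real.exp (-p * x) := by
  have hneg : (fun x => f (-x)) =O[atTop] fun x => Real.exp (-(-p) * x) :=
    isBigO_atTop_exp_of_norm_le (neg_lt_neg hqp) fun x (hx : δ ≤ x) => by
      simpa using hf (-x) (neg_le_neg hx)
  simpa [Function.comp_def] using hneg.comp_tendsto tendsto_neg_atBot_atTop

end Asymptotics

section HalfLine

variable {E : Type*} [NormedAddCommGroup E]

lemma norm_integral_Ioc_le_of_norm_le_rpow [NormedSpace ℝ E] {g : ℝ → E} {M s ε : ℝ} (hs : s < 1)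
    (hε : 0 ≤ ε) (hg : ∀ x ∈ Ioc 0 ε, ‖g x‖ ≤ M * x ^ (-s)) :
    ‖∫ x in Ioc 0 ε, g x‖ ≤ M * (1 / (1 - s)) * ε ^ (1 - s) := by
  have hs' : -1 < -s := neg_lt_neg hs
  have hint : IntegrableOn (fun x : ℝ => M * x ^ (-s)) (Ioc 0 ε) :=
    ((intervalIntegrable_iff_integrableOn_Ioc_of_le hε).1
      (intervalIntegral.intervalIntegrable_rpow' hs')).const_mul M
  calc ‖∫ x in Ioc 0 ε, g x‖
      ≤ ∫ x in Ioc 0 ε, M * x ^ (-s) :=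
        norm_integral_le_of_norm_le hint (ae_restrict_of_forall_mem measurableSet_Ioc hg)
    _ = M * ((ε ^ (-s + 1) - 0 ^ (-s + 1)) / (-s + 1)) := by
        rw [integral_const_mul, ← intervalIntegral.integral_of_le hε, integral_rpow (.inl hs')]
    _ = M * (1 / (1 - s)) * ε ^ (1 - s) := by
        rw [Real.zero_rpow (by linarith), neg_add_eq_sub]
        ring

lemma integrableOn_Ioi_of_norm_le_rpow {g : ℝ → E} {M s ε : ℝ} (hs : 0 < s)
    (hε : 0 < ε) (hcont : ContinuousOn g (Ioi ε)) (hg : ∀ x ∈ Ioi ε, ‖g x‖ ≤ M * x ^ (-s - 1)) :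
    IntegrableOn g (Ioi ε) :=
  ((integrableOn_Ioi_rpow_of_lt (by linarith) hε).const_mul M).mono'
    (hcont.aestronglyMeasurable measurableSet_Ioi) (ae_restrict_of_forall_mem measurableSet_Ioi hg)

lemma norm_integral_Ioi_le_of_norm_le_rpow [NormedSpace ℝ E] {g : ℝ → E} {M s ε : ℝ} (hs : 0 < s)
    (hε : 0 < ε) (hg : ∀ x ∈ Ioi ε, ‖g x‖ ≤ M * x ^ (-s - 1)) :
    ‖∫ x in Ioi ε, g x‖ ≤ M * (1 / s) * ε ^ (-s) := by
  have hs' : -s - 1 < -1 := by linarith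
  calc ‖∫ x in Ioi ε, g x‖
      ≤ ∫ x in Ioi ε, M * x ^ (-s - 1) :=
        norm_integral_le_of_norm_le ((integrableOn_Ioi_rpow_of_lt hs' hε).const_mul M)
          (ae_restrict_of_forall_mem measurableSet_Ioi hg)
    _ = M * (1 / s) * ε ^ (-s) := by
        rw [integral_const_mul, integral_Ioi_rpow_of_lt hs' hε, sub_add_cancel, neg_div_neg_eq]
        ring

lemma integrableOn_Ioi_exp_smul [NormedSpace ℝ E] {f : ℝ → E} {d r s : ℝ} (hs : s < 1)
    (hdr : d < r) (hf : ContinuousOn f (Ioi 0)) (hnhds : f =O[𝓝[>] 0] fun x => x ^ (-s))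
    (htop : f =O[atTop] fun x => Real.exp (-r * x)) :
    IntegrableOn (fun x => Real.exp (d * x) • f x) (Ioi 0) := by
  obtain ⟨k, hdk, hkr⟩ := exists_between hdr
  obtain ⟨M, hM⟩ := isBigO_principal.1 (isBigO_exp_smul_rpow_principal_Ioi hkr hf hnhds htop)
  have hmajorant : IntegrableOn (fun x : ℝ => M * (x ^ (-s) * Real.exp (-(k - d) * x)))
      (Ioi 0) := by
    have h := integrableOn_rpow_mul_exp_neg_mul_rpow (p := 1) (neg_lt_neg hs) one_pos
      (sub_pos.2 hdk)
    simp only [Real.rpow_one] at h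
    exact h.const_mul M
  have hexp : Continuous fun x : ℝ => Real.exp (d * x) := by fun_prop
  refine hmajorant.mono' ((hexp.continuousOn.smul hf).aestronglyMeasurable
    measurableSet_Ioi) (ae_restrict_of_forall_mem measurableSet_Ioi fun x hx => ?_)
  calc ‖Real.exp (d * x) • f x‖
      = ‖Real.exp (k * x) • f x‖ * Real.exp (-(k - d) * x) := by
        rw [norm_smul, norm_smul, Real.norm_of_nonneg (Real.exp_nonneg _),
          Real.norm_of_nonneg (Real.exp_nonneg _), mul_right_comm, ← Real.exp_add]
        ring_nf
    _ ≤ M * ‖x ^ (-s)‖ * Real.exp (-(k - d) * x) := by gcongr; exact hM x hx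
    _ = M * (x ^ (-s) * Real.exp (-(k - d) * x)) := by
        rw [Real.norm_of_nonneg (Real.rpow_nonneg (le_of_lt hx) _), mul_assoc]

variable [NormedSpace ℂ E] {f f' : ℝ → E} {z : ℂ}

lemma norm_cexp_mul_ofReal_smul (z : ℂ) (x : ℝ) (v : E) :
    ‖Complex.exp (z * x) • v‖ = Real.exp (z.re * x) * ‖v‖ := by
  rw [norm_smul, Complex.norm_exp, Complex.re_mul_ofReal]

lemma norm_cexp_mul_ofReal_smul_le {d x : ℝ} (hz : z.re ≤ d) (hx : 0 ≤ x) (v : E) :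
    ‖Complex.exp (z * x) • v‖ ≤ ‖Real.exp (d * x) • v‖ := by
  rw [norm_cexp_mul_ofReal_smul, norm_smul, Real.norm_of_nonneg (Real.exp_nonneg _)]
  gcongr

lemma smul_integral_Ioi_cexp_smul [CompleteSpace E] {ε : ℝ}
    (hf : ∀ x ∈ Ici ε, HasDerivAt f (f' x) x)
    (hint : IntegrableOn (fun x : ℝ => Complex.exp (z * x) • f x) (Ioi ε))
    (hint' : IntegrableOn (fun x : ℝ => Complex.exp (z * x) • f' x) (Ioi ε)) :
    z • ∫ x in Ioi ε, Complex.exp (z * x) • f x =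
      -(Complex.exp (z * ε) • f ε) - ∫ x in Ioi ε, Complex.exp (z * x) • f' x := by
  have hderiv : ∀ x ∈ Ici ε, HasDerivAt (fun x : ℝ => Complex.exp (z * x) • f x)
      (Complex.exp (z * x) • f' x + z • Complex.exp (z * x) • f x) x := fun x hx => by
    have hexp : HasDerivAt (fun x : ℝ => Complex.exp (z * x)) (Complex.exp (z * x) * z) x := by
      simpa using ((Complex.ofRealCLM.hasDerivAt (x := x)).const_mul z).cexp
    exact (hexp.smul (hf x hx)).congr_deriv (by rw [smul_smul, mul_comm _ z])
  have hint_smul : IntegrableOn (fun x : ℝ => z • Complex.exp (z * x) • f x) (Ioi ε) :=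
    hint.smul z
  have hint_deriv : IntegrableOn
      (fun x : ℝ => Complex.exp (z * x) • f' x + z • Complex.exp (z * x) • f x) (Ioi ε) :=
    hint'.add hint_smul
  have hlim := tendsto_zero_of_hasDerivAt_of_integrableOn_Ioi
    (fun x hx => hderiv x (Ioi_subset_Ici_self hx)) hint_deriv hint
  have hftc := integral_Ioi_of_hasDerivAt_of_tendsto' hderiv hint_deriv hlim
  rw [integral_add hint' hint_smul, integral_smul, zero_sub] at hftc
  exact eq_sub_of_add_eq' hftc

lemma norm_mul_norm_integral_Ioi_cexp_smul_le [CompleteSpace E] {M M' s ε : ℝ} (hs : 0 < s)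
    (hε : 0 < ε) (hf : ∀ x ∈ Ici ε, HasDerivAt f (f' x) x) (hf' : ContinuousOn f' (Ioi ε))
    (hint : IntegrableOn (fun x : ℝ => Complex.exp (z * x) • f x) (Ioi ε))
    (hM : ‖Complex.exp (z * ε) • f ε‖ ≤ M * ε ^ (-s))
    (hM' : ∀ x ∈ Ioi ε, ‖Complex.exp (z * x) • f' x‖ ≤ M' * x ^ (-s - 1)) :
    ‖z‖ * ‖∫ x in Ioi ε, Complex.exp (z * x) • f x‖ ≤ (M + M' * (1 / s)) * ε ^ (-s) := by
  have hint' : IntegrableOn (fun x : ℝ => Complex.exp (z * x) • f' x) (Ioi ε) :=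
    integrableOn_Ioi_of_norm_le_rpow hs hε (.smul (by fun_prop) hf') hM'
  calc ‖z‖ * ‖∫ x in Ioi ε, Complex.exp (z * x) • f x‖
      = ‖-(Complex.exp (z * ε) • f ε) - ∫ x in Ioi ε, Complex.exp (z * x) • f' x‖ := by
        rw [← norm_smul, smul_integral_Ioi_cexp_smul hf hint hint']
    _ ≤ ‖Complex.exp (z * ε) • f ε‖ + ‖∫ x in Ioi ε, Complex.exp (z * x) • f' x‖ := by
        simpa only [norm_neg] using norm_sub_le (-(Complex.exp (z * ε) • f ε)) _
    _ ≤ M * ε ^ (-s) + M' * (1 / s) * ε ^ (-s) :=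
        add_le_add hM (norm_integral_Ioi_le_of_norm_le_rpow hs hε hM')
    _ = (M + M' * (1 / s)) * ε ^ (-s) := by ring

lemma norm_integral_Ioi_cexp_smul_le [CompleteSpace E] {M M' s : ℝ} (hs₀ : 0 < s) (hs₁ : s < 1)
    (hf : ∀ x ∈ Ioi 0, HasDerivAt f (f' x) x) (hf' : ContinuousOn f' (Ioi 0))
    (hint : IntegrableOn (fun x : ℝ => Complex.exp (z * x) • f x) (Ioi 0))
    (hM : ∀ x ∈ Ioi (0 : ℝ), ‖Complex.exp (z * x) • f x‖ ≤ M * x ^ (-s))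
    (hM' : ∀ x ∈ Ioi (0 : ℝ), ‖Complex.exp (z * x) • f' x‖ ≤ M' * x ^ (-s - 1)) :
    ‖∫ x in Ioi (0 : ℝ), Complex.exp (z * x) • f x‖ ≤
      (M * (1 / (1 - s) + 1) + M' * (1 / s) + ∫ x in Ioi (0 : ℝ), ‖Complex.exp (z * x) • f x‖) *
        (1 + ‖z‖) ^ (s - 1) := by
  set g : ℝ → E := fun x => Complex.exp (z * x) • f x
  set R := 1 + ‖z‖ with hR
  have hR₁ : 1 ≤ R := le_add_of_nonneg_right (norm_nonneg z)
  have hR₀ : 0 < R := one_pos.trans_le hR₁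
  have hε : 0 < R⁻¹ := inv_pos.2 hR₀
  have hsub : Ioi R⁻¹ ⊆ Ioi 0 := Ioi_subset_Ioi hε.le
  have hnear : ‖∫ x in Ioc 0 R⁻¹, g x‖ ≤ M * (1 / (1 - s)) * R ^ (s - 1) := by
    have h := norm_integral_Ioc_le_of_norm_le_rpow hs₁ hε.le fun x hx => hM x hx.1
    rwa [Real.inv_rpow hR₀.le, ← Real.rpow_neg hR₀.le, neg_sub] at h
  have hfar_deriv : ‖z‖ * ‖∫ x in Ioi R⁻¹, g x‖ ≤ (M + M' * (1 / s)) * R ^ s := by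
    have h := norm_mul_norm_integral_Ioi_cexp_smul_le hs₀ hε
      (fun x hx => hf x (hε.trans_le hx)) (hf'.mono hsub) (hint.mono_set hsub) (hM _ hε)
      fun x hx => hM' x (hsub hx)
    rwa [Real.inv_rpow hR₀.le, ← Real.rpow_neg hR₀.le, neg_neg] at h
  have hfar_trivial : ‖∫ x in Ioi R⁻¹, g x‖ ≤ (∫ x in Ioi 0, ‖g x‖) * R ^ s :=
    calc ‖∫ x in Ioi R⁻¹, g x‖
        ≤ ∫ x in Ioi R⁻¹, ‖g x‖ := norm_integral_le_integral_norm g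
      _ ≤ ∫ x in Ioi 0, ‖g x‖ := setIntegral_mono_set hint.norm
          (.of_forall fun x => norm_nonneg (g x)) hsub.eventuallyLE
      _ ≤ (∫ x in Ioi 0, ‖g x‖) * R ^ s := le_mul_of_one_le_right
          (integral_nonneg fun x => norm_nonneg (g x)) (Real.one_le_rpow hR₁ hs₀.le)
  -- Adding the two bounds on the far part replaces `‖z‖` by `1 + ‖z‖`, so small `z` is not special.
  have hfar : ‖∫ x in Ioi R⁻¹, g x‖ ≤
      (M + M' * (1 / s) + ∫ x in Ioi 0, ‖g x‖) * R ^ (s - 1) := by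
    rw [Real.rpow_sub_one hR₀.ne', ← mul_div_assoc, le_div_iff₀ hR₀]
    linear_combination hfar_deriv + hfar_trivial + ‖∫ x in Ioi R⁻¹, g x‖ * hR
  calc ‖∫ x in Ioi 0, g x‖
      = ‖(∫ x in Ioc 0 R⁻¹, g x) + ∫ x in Ioi R⁻¹, g x‖ := by
        rw [← setIntegral_union Ioc_disjoint_Ioi_same measurableSet_Ioi
          (hint.mono_set Ioc_subset_Ioi_self) (hint.mono_set hsub), Ioc_union_Ioi_eq_Ioi hε.le]
    _ ≤ M * (1 / (1 - s)) * R ^ (s - 1) +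
        (M + M' * (1 / s) + ∫ x in Ioi 0, ‖g x‖) * R ^ (s - 1) :=
        norm_add_le_of_le hnear hfar
    _ = _ := by ring

lemma exists_forall_norm_cexp_smul_le_rpow {d r t : ℝ} (hdr : d < r)
    (hf : ContinuousOn f (Ioi 0)) (hnhds : f =O[𝓝[>] 0] fun x => x ^ t)
    (htop : f =O[atTop] fun x => Real.exp (-r * x)) :
    ∃ M, ∀ z : ℂ, z.re ≤ d → ∀ x ∈ Ioi (0 : ℝ), ‖Complex.exp (z * x) • f x‖ ≤ M * x ^ t := by
  obtain ⟨M, hM⟩ := isBigO_principal.1 (isBigO_exp_smul_rpow_principal_Ioi hdr hf hnhds htop)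
  refine ⟨M, fun z hz x hx => (norm_cexp_mul_ofReal_smul_le hz (le_of_lt hx) (f x)).trans ?_⟩
  simpa only [Real.norm_of_nonneg (Real.rpow_nonneg (le_of_lt hx) t)] using hM x hx

lemma exists_norm_integral_Ioi_cexp_smul_le [CompleteSpace E] {d r s : ℝ} (hs₀ : 0 < s)
    (hs₁ : s < 1) (hdr : d < r)
    (hf : ∀ x ∈ Ioi 0, HasDerivAt f (f' x) x) (hf' : ContinuousOn f' (Ioi 0))
    (hnhds : f =O[𝓝[>] 0] fun x => x ^ (-s)) (hnhds' : f' =O[𝓝[>] 0] fun x => x ^ (-s - 1))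
    (htop : f =O[atTop] fun x => Real.exp (-r * x))
    (htop' : f' =O[atTop] fun x => Real.exp (-r * x)) :
    ∃ C, ∀ z : ℂ, z.re ≤ d →
      IntegrableOn (fun x : ℝ => Complex.exp (z * x) • f x) (Ioi 0) ∧
      ‖∫ x in Ioi (0 : ℝ), Complex.exp (z * x) • f x‖ ≤ C * (1 + ‖z‖) ^ (s - 1) := by
  have hcont : ContinuousOn f (Ioi 0) := fun x hx => (hf x hx).continuousAt.continuousWithinAt
  have hint := integrableOn_Ioi_exp_smul hs₁ hdr hcont hnhds htop
  obtain ⟨M, hM⟩ := exists_forall_norm_cexp_smul_le_rpow hdr hcont hnhds htop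
  obtain ⟨M', hM'⟩ := exists_forall_norm_cexp_smul_le_rpow hdr hf' hnhds' htop'
  refine ⟨M * (1 / (1 - s) + 1) + M' * (1 / s) + ∫ x in Ioi 0, ‖Real.exp (d * x) • f x‖,
    fun z hz => ?_⟩
  have hle : ∀ x ∈ Ioi (0 : ℝ), ‖Complex.exp (z * x) • f x‖ ≤ ‖Real.exp (d * x) • f x‖ :=
    fun x hx => norm_cexp_mul_ofReal_smul_le hz (le_of_lt hx) (f x)
  have hexp : Continuous fun x : ℝ => Complex.exp (z * x) := by fun_prop
  have hintz : IntegrableOn (fun x : ℝ => Complex.exp (z * x) • f x) (Ioi 0) :=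
    hint.norm.mono' ((hexp.continuousOn.smul hcont).aestronglyMeasurable measurableSet_Ioi)
      (ae_restrict_of_forall_mem measurableSet_Ioi hle)
  refine ⟨hintz, (norm_integral_Ioi_cexp_smul_le hs₀ hs₁ hf hf' hintz (hM z hz)
    (hM' z hz)).trans ?_⟩
  gcongr ?_ * _
  exact add_le_add_right (setIntegral_mono_on hintz.norm hint.norm measurableSet_Ioi hle) _

end HalfLine

section Reflection

variable {E : Type*} [NormedAddCommGroup E] {f : ℝ → E}

lemma isBigO_nhdsGT_zero_rpow_of_abs_rpow {t : ℝ} (hf : f =O[𝓝[≠] 0] fun x => |x| ^ t) :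
    f =O[𝓝[>] 0] fun x => x ^ t :=
  (hf.mono (nhdsGT_le_nhdsNE 0)).congr' .rfl <| by
    filter_upwards [self_mem_nhdsWithin] with x hx
    rw [abs_of_pos hx]

lemma isBigO_comp_neg_nhdsNE_zero_abs_rpow {t : ℝ} (hf : f =O[𝓝[≠] 0] fun x => |x| ^ t) :
    (fun x => f (-x)) =O[𝓝[≠] 0] fun x => |x| ^ t := by
  have hneg : Tendsto (fun x : ℝ => -x) (𝓝[≠] 0) (𝓝[≠] 0) :=
    tendsto_nhdsWithin_iff.2 ⟨(continuous_neg.tendsto' 0 0 neg_zero).mono_left nhdsWithin_le_nhds,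
      eventually_mem_nhdsWithin.mono fun x hx => neg_ne_zero.2 hx⟩
  simpa only [Function.comp_def, abs_neg] using hf.comp_tendsto hneg

lemma integrableOn_Iic_zero_of_comp_neg (hf : IntegrableOn (fun x => f (-x)) (Ioi 0)) :
    IntegrableOn f (Iic 0) := by
  rw [← neg_zero] at hf
  exact (integrableOn_Iic_iff_integrableOn_Iio (by simp)).2
    (by simpa only [neg_neg] using hf.comp_neg_Iio)

lemma integrable_of_integrableOn_Ioi_zero (hneg : IntegrableOn (fun x => f (-x)) (Ioi 0))
    (hpos : IntegrableOn f (Ioi 0)) : Integrable f := by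
  rw [← integrableOn_univ, ← Iic_union_Ioi (a := (0 : ℝ))]
  exact (integrableOn_Iic_zero_of_comp_neg hneg).union hpos

lemma integral_eq_integral_Ioi_zero_comp_neg_add [NormedSpace ℝ E]
    (hneg : IntegrableOn (fun x => f (-x)) (Ioi 0)) (hpos : IntegrableOn f (Ioi 0)) :
    ∫ x, f x = (∫ x in Ioi 0, f (-x)) + ∫ x in Ioi 0, f x := by
  rw [integral_comp_neg_Ioi, neg_zero,
    intervalIntegral.integral_Iic_add_Ioi (integrableOn_Iic_zero_of_comp_neg hneg) hpos]

end Reflection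

section SingularKernel

variable {E : Type*} [NormedAddCommGroup E] {s α β : ℝ}

/-- The class of kernels `K : ℝ → E` to which the decay theorem applies: `K` is `C¹` with derivative
`K'` away from `0`, has a singularity of order `|x|⁻ˢ` at `0` that may be differentiated once, and
its Fourier–Laplace transform converges absolutely in the strip `α < Im ξ < β`. The growth
conditions at `±∞` are imposed for each rate strictly inside the strip, so that polynomial
prefactors at the limiting rates are allowed. -/
structure IsSingularKernel [NormedSpace ℝ E] (K K' : ℝ → E) (s α β : ℝ) : Prop where
  hasDerivAt : ∀ x ≠ 0, HasDerivAt K (K' x) x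
  continuousOn_deriv : ContinuousOn K' {0}ᶜ
  isBigO_zero : K =O[𝓝[≠] 0] fun x => |x| ^ (-s)
  isBigO_zero_deriv : K' =O[𝓝[≠] 0] fun x => |x| ^ (-s - 1)
  isBigO_atBot : ∀ p > α, K =O[atBot] fun x => Real.exp (-p * x)
  isBigO_atBot_deriv : ∀ p > α, K' =O[atBot] fun x => Real.exp (-p * x)
  isBigO_atTop : ∀ q < β, K =O[atTop] fun x => Real.exp (-q * x)
  isBigO_atTop_deriv : ∀ q < β, K' =O[atTop] fun x => Real.exp (-q * x)

namespace IsSingularKernel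

lemma comp_neg [NormedSpace ℝ E] {K K' : ℝ → E} (h : IsSingularKernel K K' s α β) :
    IsSingularKernel (fun x => K (-x)) (fun x => -K' (-x)) s (-β) (-α) where
  hasDerivAt x hx := by
    simpa [Function.comp_def] using
      (h.hasDerivAt (-x) (neg_ne_zero.2 hx)).scomp x (hasDerivAt_neg x)
  continuousOn_deriv :=
    (h.continuousOn_deriv.comp continuousOn_neg fun _ hx => neg_ne_zero.2 hx).neg
  isBigO_zero := isBigO_comp_neg_nhdsNE_zero_abs_rpow h.isBigO_zero
  isBigO_zero_deriv := (isBigO_comp_neg_nhdsNE_zero_abs_rpow h.isBigO_zero_deriv).neg_left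
  isBigO_atBot p hp := by
    simpa [Function.comp_def] using
      (h.isBigO_atTop (-p) (neg_lt.1 hp)).comp_tendsto tendsto_neg_atBot_atTop
  isBigO_atBot_deriv p hp := by
    simpa [Function.comp_def] using
      (h.isBigO_atTop_deriv (-p) (neg_lt.1 hp)).comp_tendsto tendsto_neg_atBot_atTop
  isBigO_atTop q hq := by
    simpa [Function.comp_def] using
      (h.isBigO_atBot (-q) (lt_neg.1 hq)).comp_tendsto tendsto_neg_atTop_atBot
  isBigO_atTop_deriv q hq := by
    simpa [Function.comp_def] using
      (h.isBigO_atBot_deriv (-q) (lt_neg.1 hq)).comp_tendsto tendsto_neg_atTop_atBot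

lemma ofReal {K K' : ℝ → ℝ} (h : IsSingularKernel K K' s α β) :
    IsSingularKernel (fun x => (K x : ℂ)) (fun x => (K' x : ℂ)) s α β where
  hasDerivAt x hx := (h.hasDerivAt x hx).ofReal_comp
  continuousOn_deriv := Complex.continuous_ofReal.comp_continuousOn h.continuousOn_deriv
  isBigO_zero := Complex.isBigO_ofReal_left.2 h.isBigO_zero
  isBigO_zero_deriv := Complex.isBigO_ofReal_left.2 h.isBigO_zero_deriv
  isBigO_atBot p hp := Complex.isBigO_ofReal_left.2 (h.isBigO_atBot p hp)
  isBigO_atBot_deriv p hp := Complex.isBigO_ofReal_left.2 (h.isBigO_atBot_deriv p hp)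
  isBigO_atTop q hq := Complex.isBigO_ofReal_left.2 (h.isBigO_atTop q hq)
  isBigO_atTop_deriv q hq := Complex.isBigO_ofReal_left.2 (h.isBigO_atTop_deriv q hq)

lemma of_abs_le {K : ℝ → ℝ} {C δ c c' : ℝ} (hs₀ : s ≠ 0) (hs₁ : s ≠ 1) (hδ : 0 < δ)
    (hK : ContDiffOn ℝ 1 K {0}ᶜ)
    (hneg : ∀ x ≤ -δ, |K x| + |deriv K x| ≤ C * ((1 + |x|) * Real.exp (-α * x)))
    (hpos : ∀ x ≥ δ, |K x| + |deriv K x| ≤ C * ((1 + |x|) * Real.exp (-β * x)))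
    (hzero : ∀ x ≠ 0, |x| ≤ δ → |K x - c * |x| ^ (-s)| ≤ C * |x| ^ (1 - s))
    (hzero' : ∀ x ≠ 0, |x| ≤ δ →
      |deriv K x + c' * Real.sign x * |x| ^ (-s - 1)| ≤ C * |x| ^ (-s)) :
    IsSingularKernel K (deriv K) s α β := by
  have hK_le (x : ℝ) : ‖K x‖ ≤ |K x| + |deriv K x| := le_add_of_nonneg_right (abs_nonneg _)
  have hK_le' (x : ℝ) : ‖deriv K x‖ ≤ |K x| + |deriv K x| := le_add_of_nonneg_left (abs_nonneg _)
  have hsing : (fun x : ℝ => c * |x| ^ (-s)) =O[𝓝[≠] 0] fun x => |x| ^ (-s) :=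
    isBigO_const_mul_self c _ _
  have hsing' : (fun x : ℝ => -(c' * Real.sign x * |x| ^ (-s - 1))) =O[𝓝[≠] 0]
      fun x => |x| ^ (-s - 1) := by
    refine .of_bound |c'| (.of_forall fun x => ?_)
    rw [norm_neg, norm_mul, norm_mul, Real.norm_eq_abs c']
    exact mul_le_mul_of_nonneg_right (mul_le_of_le_one_right (abs_nonneg c') (abs_sign_le_one x))
      (norm_nonneg _)
  exact
    { hasDerivAt x hx := ((hK.differentiableOn one_ne_zero).differentiableAt
        (isOpen_compl_singleton.mem_nhds hx)).hasDerivAt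
      continuousOn_deriv := hK.continuousOn_deriv_of_isOpen isOpen_compl_singleton le_rfl
      isBigO_zero := isBigO_abs_rpow_nhdsNE_zero_of_norm_sub_le hδ (by linarith)
        (sub_ne_zero.2 hs₁.symm) hzero hsing
      isBigO_zero_deriv := isBigO_abs_rpow_nhdsNE_zero_of_norm_sub_le hδ (sub_one_lt (-s)).le
        (neg_ne_zero.2 hs₀) (by simpa only [sub_neg_eq_add, Real.norm_eq_abs] using hzero') hsing'
      isBigO_atBot p hp :=
        isBigO_atBot_exp_of_norm_le hp fun x hx => (hK_le x).trans (hneg x hx)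
      isBigO_atBot_deriv p hp :=
        isBigO_atBot_exp_of_norm_le hp fun x hx => (hK_le' x).trans (hneg x hx)
      isBigO_atTop q hq :=
        isBigO_atTop_exp_of_norm_le hq fun x hx => (hK_le x).trans (hpos x hx)
      isBigO_atTop_deriv q hq :=
        isBigO_atTop_exp_of_norm_le hq fun x hx => (hK_le' x).trans (hpos x hx) }

lemma of_abs_sub_pi_mul_le {K : ℝ → ℝ} {C : ℝ} (hK : ContDiffOn ℝ 1 K {0}ᶜ)
    (hneg : ∀ x ≤ -2, |K x| + |deriv K x| ≤ C * (1 + |x|) * Real.exp x)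
    (hpos : ∀ x ≥ 2, |K x| + |deriv K x| ≤ C * (1 + |x|) * Real.exp (-(5 * x) / 2))
    (hzero : ∀ x ≠ 0, |x| ≤ 2 →
      |K x - Real.pi * |x| ^ (-(1 / 2) : ℝ)| ≤ C * |x| ^ (1 / 2 : ℝ) ∧
      |deriv K x + Real.pi / 2 * Real.sign x * |x| ^ (-(3 / 2) : ℝ)| ≤
        C * |x| ^ (-(1 / 2) : ℝ)) :
    IsSingularKernel K (deriv K) (1 / 2) (-1) (5 / 2) := by
  refine .of_abs_le (C := C) (c := Real.pi) (c' := Real.pi / 2) (by norm_num) (by norm_num)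
    two_pos hK (fun x hx => ?_) (fun x hx => ?_) (fun x hx hx₂ => ?_) fun x hx hx₂ => ?_
  · simpa only [mul_assoc, neg_neg, one_mul] using hneg x hx
  · exact (hpos x hx).trans_eq (by ring_nf)
  · convert (hzero x hx hx₂).1 using 3
    norm_num
  · convert (hzero x hx hx₂).2 using 5
    norm_num

variable [NormedSpace ℂ E] [CompleteSpace E] {K K' : ℝ → E}

lemma exists_norm_integral_Ioi_le {d : ℝ} (h : IsSingularKernel K K' s α β) (hs₀ : 0 < s)
    (hs₁ : s < 1) (hd : d < β) :
    ∃ C, ∀ z : ℂ, z.re ≤ d →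
      IntegrableOn (fun x : ℝ => Complex.exp (z * x) • K x) (Ioi 0) ∧
      ‖∫ x in Ioi (0 : ℝ), Complex.exp (z * x) • K x‖ ≤ C * (1 + ‖z‖) ^ (s - 1) := by
  obtain ⟨r, hdr, hrβ⟩ := exists_between hd
  exact exists_norm_integral_Ioi_cexp_smul_le hs₀ hs₁ hdr
    (fun x hx => h.hasDerivAt x (ne_of_gt hx))
    (h.continuousOn_deriv.mono fun x hx => ne_of_gt hx)
    (isBigO_nhdsGT_zero_rpow_of_abs_rpow h.isBigO_zero)
    (isBigO_nhdsGT_zero_rpow_of_abs_rpow h.isBigO_zero_deriv)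
    (h.isBigO_atTop r hrβ) (h.isBigO_atTop_deriv r hrβ)

lemma exists_norm_integral_le {a b : ℝ} (h : IsSingularKernel K K' s α β) (hs₀ : 0 < s)
    (hs₁ : s < 1) (ha : α < a) (hb : b < β) :
    ∃ C, ∀ ξ : ℂ, ξ.im ∈ Icc a b →
      Integrable (fun x : ℝ => Complex.exp (-(Complex.I * x * ξ)) • K x) ∧
      ‖∫ x : ℝ, Complex.exp (-(Complex.I * x * ξ)) • K x‖ ≤ C * (1 + ‖ξ‖) ^ (s - 1) := by
  obtain ⟨Cpos, hCpos⟩ := h.exists_norm_integral_Ioi_le hs₀ hs₁ hb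
  obtain ⟨Cneg, hCneg⟩ := h.comp_neg.exists_norm_integral_Ioi_le hs₀ hs₁ (neg_lt_neg ha)
  refine ⟨Cneg + Cpos, fun ξ hξ => ?_⟩
  obtain ⟨hint_pos, hnorm_pos⟩ := hCpos (-(Complex.I * ξ)) (by simpa using hξ.2)
  obtain ⟨hint_neg, hnorm_neg⟩ := hCneg (Complex.I * ξ) (by simpa using hξ.1)
  set F : ℝ → E := fun x => Complex.exp (-(Complex.I * x * ξ)) • K x
  have hF (x : ℝ) : Complex.exp (-(Complex.I * ξ) * x) • K x = F x := by
    simp only [F]; ring_nf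
  have hF_neg (x : ℝ) : Complex.exp (Complex.I * ξ * x) • K (-x) = F (-x) := by
    simp only [F, Complex.ofReal_neg]; ring_nf
  simp only [hF, norm_neg, norm_mul, Complex.norm_I, one_mul] at hint_pos hnorm_pos
  simp only [hF_neg, norm_mul, Complex.norm_I, one_mul] at hint_neg hnorm_neg
  refine ⟨integrable_of_integrableOn_Ioi_zero hint_neg hint_pos, ?_⟩
  rw [integral_eq_integral_Ioi_zero_comp_neg_add hint_neg hint_pos, add_mul]
  exact norm_add_le_of_le hnorm_neg hnorm_pos

end IsSingularKernel

end SingularKernel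

theorem stmt10_general {E : Type*} [NormedAddCommGroup E] [NormedSpace ℂ E] [CompleteSpace E]
    {K K' : ℝ → E} {s α β : ℝ} (hK : IsSingularKernel K K' s α β) (hs₀ : 0 < s) (hs₁ : s < 1) :
    (∀ ξ : ℂ, ξ.im ∈ Ioo α β →
      Integrable (fun x : ℝ => Complex.exp (-(Complex.I * x * ξ)) • K x)) ∧
    (∀ a b : ℝ, a ≤ b → Icc a b ⊆ Ioo α β → ∃ C, 0 < C ∧ ∀ ξ : ℂ, ξ.im ∈ Icc a b →
      ‖∫ x : ℝ, Complex.exp (-(Complex.I * x * ξ)) • K x‖ ≤ C * (1 + ‖ξ‖) ^ (s - 1)) := by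
  refine ⟨fun ξ hξ => ?_, fun a b hab hI => ?_⟩
  · obtain ⟨C, hC⟩ := hK.exists_norm_integral_le hs₀ hs₁ hξ.1 hξ.2
    exact (hC ξ ⟨le_rfl, le_rfl⟩).1
  · obtain ⟨C, hC⟩ :=
      hK.exists_norm_integral_le hs₀ hs₁ (hI ⟨le_rfl, hab⟩).1 (hI ⟨hab, le_rfl⟩).2
    refine ⟨max C 1, lt_max_of_lt_right one_pos, fun ξ hξ => (hC ξ hξ).2.trans ?_⟩
    gcongr
    exact le_max_left C 1

theorem stmt10 (C₀ : ℝ) (hC₀ : 0 < C₀) (K : ℝ → ℝ)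
    (hsm : ContDiffOn ℝ 2 K ({(0:ℝ)}ᶜ))
    (hneg : ∀ x : ℝ, x ≤ -2 →
      |K x| + |deriv K x| + |deriv (deriv K) x| ≤ C₀ * (1 + |x|) * Real.exp x)
    (hpos : ∀ x : ℝ, 2 ≤ x →
      |K x| + |deriv K x| + |deriv (deriv K) x| ≤ C₀ * (1 + |x|) * Real.exp (-(5 * x) / 2))
    (h0 : ∀ x : ℝ, x ≠ 0 → |x| ≤ 2 →
      |K x - Real.pi * |x| ^ (-(1/2) : ℝ)| ≤ C₀ * |x| ^ ((1/2) : ℝ) ∧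
      |deriv K x + Real.pi / 2 * Real.sign x * |x| ^ (-(3/2) : ℝ)| ≤
        C₀ * |x| ^ (-(1/2) : ℝ)) :
    -- `K̂` is defined (absolutely convergent) in the strip `Im ξ ∈ (-1, 5/2)`
    (∀ ξ : ℂ, ξ.im ∈ Ioo (-1 : ℝ) (5/2) →
      Integrable (fun x : ℝ => (K x : ℂ) * Complex.exp (-(Complex.I * x * ξ)))) ∧
    -- the uniform decay estimate `|K̂(ξ)| ≤ C_I (1+|ξ|)^{-1/2}`
    (∀ a b : ℝ, a ≤ b → Icc a b ⊆ Ioo (-1 : ℝ) (5/2) →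
      ∃ C_I : ℝ, 0 < C_I ∧ ∀ ξ : ℂ, ξ.im ∈ Icc a b →
        ‖∫ x : ℝ, (K x : ℂ) * Complex.exp (-(Complex.I * x * ξ))‖ ≤
          C_I * (1 + ‖ξ‖) ^ (-(1/2) : ℝ)) := by
  have hK : IsSingularKernel K (deriv K) (1 / 2) (-1) (5 / 2) :=
    .of_abs_sub_pi_mul_le (hsm.of_le one_le_two)
      (fun x hx => (le_add_of_nonneg_right (abs_nonneg _)).trans (hneg x hx))
      (fun x hx => (le_add_of_nonneg_right (abs_nonneg _)).trans (hpos x hx)) h0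
  have hexponent : (1 / 2 - 1 : ℝ) = -(1 / 2) := by norm_num
  simpa only [smul_eq_mul, mul_comm (Complex.exp _), hexponent] using
    stmt10_general hK.ofReal one_half_pos one_half_lt_one
end
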